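/- arXiv:2210.13933 — 11 statements merged into one kernel-verified Lean document; each statement's English description precedes it below -/
import Mathlib

section
/- Let p be a polynomial with complex coefficients of positive degree, with factorization p = c·∏_{i=1}^{s} (t − a_i)^{m_i}, where c ≠ 0, the complex numbers a_1, …, a_s are pairwise distinct, and each m_i ≥ 1. Set q := gcd(p, p′). Then q² divides p·gcd(q, q′), and the quotient p·gcd(q, q′)/q² is associated to ∏_{i : m_i = 1} (t − a_i), the product of the linear factors of p occurring exactly once. -/
open Polynomial

lemma rm_gcd_aux (p : Polynomial ℂ) (hp : p ≠ 0) (x : ℂ) :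
    (gcd p (derivative p)).rootMultiplicity x = p.rootMultiplicity x - 1 := by
  have hg : gcd p (derivative p) ≠ 0 := fun h => hp ((gcd_eq_zero_iff _ _).1 h).1
  refine eq_of_forall_le_iff fun n => ?_
  rw [le_rootMultiplicity_iff hg, dvd_gcd_iff, ← le_rootMultiplicity_iff hp]
  by_cases hx : p.IsRoot x
  · have hd : derivative p ≠ 0 := by
      intro h
      have h1 := derivative_eq_zero.1 h
      rw [eq_C_of_natDegree_eq_zero h1] at hx hp
      simp at hx hp
      exact hp hx
    rw [← le_rootMultiplicity_iff hd, derivative_rootMultiplicity_of_root hx]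
    omega
  · rw [rootMultiplicity_eq_zero hx]
    constructor
    · rintro ⟨h, -⟩
      omega
    · intro h
      have : n = 0 := by omega
      subst this
      simp

lemma assoc_aux (f g : Polynomial ℂ) (hf : f ≠ 0) (hg : g ≠ 0)
    (h : ∀ x, f.rootMultiplicity x = g.rootMultiplicity x) : Associated f g := by
  have hr : f.roots = g.roots := by
    ext x
    simp [count_roots, h]
  have h1 : ∀ f : Polynomial ℂ, f ≠ 0 →
      Associated f (f.roots.map fun a => X - C a).prod := by
    intro f hf
    have h2 := (IsAlgClosed.splits f).eq_prod_roots
    have hu : IsUnit (C f.leadingCoeff) :=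
      isUnit_C.2 (isUnit_iff_ne_zero.2 (leadingCoeff_ne_zero.2 hf))
    conv_lhs => rw [h2]
    exact associated_unit_mul_left _ _ hu
  have h3 := h1 f hf
  rw [hr] at h3
  exact h3.trans (h1 g hg).symm

lemma rm_prod_aux {ι : Type*} (t : Finset ι) (a : ι → ℂ) (m : ι → ℕ) (x : ℂ) :
    (∏ i ∈ t, (X - C (a i)) ^ m i).rootMultiplicity x
      = ∑ i ∈ t, if x = a i then m i else 0 := by
  classical
  induction t using Finset.induction_on with
  | empty => simp
  | insert i t hi ih =>
    rw [Finset.prod_insert hi, Finset.sum_insert hi, rootMultiplicity_mul, ih]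
    · congr 1
      rw [← count_roots, roots_pow, roots_X_sub_C]
      simp [Multiset.count_singleton]
    · exact mul_ne_zero (pow_ne_zero _ (X_sub_C_ne_zero _))
        (Finset.prod_ne_zero_iff.2 fun j _ => pow_ne_zero _ (X_sub_C_ne_zero _))

/-- For `p ∈ ℂ[t]` of positive degree with factorization
`p = c · ∏ᵢ (t - aᵢ)^{mᵢ}` (`c ≠ 0`, the `aᵢ` pairwise distinct, `mᵢ ≥ 1`), setting
`q := gcd(p, p')`, the square `q²` divides `p · gcd(q, q')` and the quotient
`p · gcd(q, q') / q²` is associated to `∏_{mᵢ = 1} (t - aᵢ)`, the product of the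
linear factors of `p` occurring exactly once. -/
theorem simple_factors_assoc
    (p : Polynomial ℂ) (c : ℂ) (s : ℕ) (a : Fin s → ℂ) (m : Fin s → ℕ)
    (hdeg : 0 < p.degree) (hc : c ≠ 0) (hm : ∀ i, 1 ≤ m i)
    (ha : Function.Injective a)
    (hfac : p = Polynomial.C c * ∏ i, (Polynomial.X - Polynomial.C (a i)) ^ m i)
    (q : Polynomial ℂ) (hq : q = gcd p (Polynomial.derivative p)) :
    q ^ 2 ∣ p * gcd q (Polynomial.derivative q) ∧
    Associated (p * gcd q (Polynomial.derivative q) / q ^ 2)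
      (∏ i ∈ Finset.univ.filter (fun i => m i = 1),
        (Polynomial.X - Polynomial.C (a i))) := by
  have hp : p ≠ 0 := by
    rintro rfl
    simp at hdeg
  have hq0 : q ≠ 0 := fun h => hp ((gcd_eq_zero_iff _ _).1 (hq.symm.trans h)).1
  have hg0 : gcd q (derivative q) ≠ 0 := fun h => hq0 ((gcd_eq_zero_iff _ _).1 h).1
  have hS0 : (∏ i ∈ Finset.univ.filter (fun i => m i = 1), (X - C (a i))) ≠ 0 :=
    Finset.prod_ne_zero_iff.2 fun j _ => X_sub_C_ne_zero _
  have key : Associated (p * gcd q (derivative q))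
      (q ^ 2 * ∏ i ∈ Finset.univ.filter (fun i => m i = 1), (X - C (a i))) := by
    refine assoc_aux _ _ (mul_ne_zero hp hg0) (mul_ne_zero (pow_ne_zero _ hq0) hS0) fun x => ?_
    have hqx : q.rootMultiplicity x = p.rootMultiplicity x - 1 := by
      rw [hq]
      exact rm_gcd_aux p hp x
    have hS := rm_prod_aux (Finset.univ.filter (fun i => m i = 1)) a (fun _ => 1) x
    simp only [pow_one] at hS
    have hP : p.rootMultiplicity x = ∑ i, if x = a i then m i else 0 := by
      rw [← rm_prod_aux, ← count_roots, ← count_roots, hfac, roots_C_mul _ hc]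
    rw [rootMultiplicity_mul (mul_ne_zero hp hg0),
      rootMultiplicity_mul (mul_ne_zero (pow_ne_zero _ hq0) hS0), pow_two,
      rootMultiplicity_mul (mul_ne_zero hq0 hq0), rm_gcd_aux q hq0, hqx, hS, hP]
    rw [Finset.sum_filter]
    by_cases hx : ∃ i, x = a i
    · obtain ⟨i, rfl⟩ := hx
      have hmi := hm i
      have e : ∀ j, (a i = a j) ↔ i = j := fun j => ha.eq_iff
      have e2 : (∑ j, if m j = 1 then (if i = j then 1 else 0) else 0)
          = if m i = 1 then 1 else 0 := by
        rw [Finset.sum_eq_single i]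
        · simp
        · intro j _ hj
          simp [hj.symm]
        · simp
      simp only [e]
      rw [e2]
      simp only [Finset.sum_ite_eq, Finset.mem_univ, if_true]
      split_ifs <;> omega
    · push Not at hx
      simp [hx]
  obtain ⟨u, hu⟩ := key.symm
  refine ⟨⟨_, by rw [← hu, mul_assoc]⟩, ?_⟩
  rw [← hu, mul_assoc, mul_div_cancel_left₀ _ (pow_ne_zero 2 hq0)]
  exact associated_mul_unit_left _ _ u.isUnit
end

section
/- Let p be a univariate real polynomial of positive degree and suppose that every real root of p has odd multiplicity. Then {t ∈ ℝ : p(t) ≥ 0} equals the closure (in the usual topology of ℝ) of {t ∈ ℝ : p(t) > 0}. -/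
open Polynomial

/-- If `p ∈ ℝ[t]` has positive degree and every real root of `p` has
odd multiplicity, then `{t : p(t) ≥ 0}` is the closure of `{t : p(t) > 0}`. -/
theorem nonneg_set_eq_closure_pos_set
    (p : Polynomial ℝ) (hdeg : 0 < p.degree)
    (hodd : ∀ a : ℝ, p.IsRoot a → Odd (p.rootMultiplicity a)) :
    {t : ℝ | 0 ≤ p.eval t} = closure {t : ℝ | 0 < p.eval t} := by
  have hp : p ≠ 0 := by
    rintro rfl
    simp at hdeg
  apply Set.Subset.antisymm
  · intro a ha
    have ha' : 0 ≤ p.eval a := ha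
    rcases ha'.lt_or_eq with h | h
    · exact subset_closure h
    · have hm := hodd a h.symm
      obtain ⟨q, hq, hnd⟩ := p.exists_eq_pow_rootMultiplicity_mul_and_not_dvd hp a
      rw [dvd_iff_isRoot, IsRoot.def] at hnd
      set m := p.rootMultiplicity a
      have hev : ∀ x, p.eval x = (x - a) ^ m * q.eval x := by
        intro x
        conv_lhs => rw [hq]
        simp
      have hc : Filter.Tendsto (fun x => q.eval x) (nhds a) (nhds (q.eval a)) :=
        q.continuous.tendsto a
      rw [mem_closure_iff_frequently]
      rcases lt_or_gt_of_ne hnd with hneg | hpos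
      · have h1 : ∀ᶠ x in nhdsWithin a (Set.Iio a), 0 < p.eval x := by
          filter_upwards [(hc.eventually_lt_const hneg).filter_mono nhdsWithin_le_nhds,
            self_mem_nhdsWithin] with x hx hxa
          rw [hev]
          exact mul_pos_of_neg_of_neg (hm.pow_neg (sub_neg.2 hxa)) hx
        exact h1.frequently.filter_mono nhdsWithin_le_nhds
      · have h1 : ∀ᶠ x in nhdsWithin a (Set.Ioi a), 0 < p.eval x := by
          filter_upwards [(hc.eventually_const_lt hpos).filter_mono nhdsWithin_le_nhds,
            self_mem_nhdsWithin] with x hx hxa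
          rw [hev]
          exact mul_pos (pow_pos (sub_pos.2 hxa) m) hx
        exact h1.frequently.filter_mono nhdsWithin_le_nhds
  · exact closure_minimal (fun x (hx : 0 < p.eval x) => show 0 ≤ p.eval x from hx.le)
      (isClosed_le continuous_const p.continuous)
end

section
/- Let p_1, …, p_m be univariate real polynomials of positive degree such that: (1) every real root of each p_i has odd multiplicity; and (2) no two of p_1, …, p_m have a common real root. Then the closure of ⋂_{i=1}^{m} {t ∈ ℝ : p_i(t) > 0} equals ⋂_{i=1}^{m} {t ∈ ℝ : p_i(t) ≥ 0}. -/
open Polynomial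

theorem freq_pos_near_odd_root (p : Polynomial ℝ) (hp : p ≠ 0) (a : ℝ)
    (hodd : Odd (p.rootMultiplicity a)) : ∃ᶠ x in nhds a, 0 < p.eval x := by
  obtain ⟨q, hq, hndvd⟩ := Polynomial.exists_eq_pow_rootMultiplicity_mul_and_not_dvd p hp a
  generalize p.rootMultiplicity a = n at hq hodd
  have hqa : q.eval a ≠ 0 := fun h => hndvd (Polynomial.dvd_iff_isRoot.mpr h)
  have hev : ∀ x, p.eval x = (x - a) ^ n * q.eval x := by
    intro x
    rw [hq]
    simp
  rcases lt_or_gt_of_ne hqa with h | h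
  · have h1 : ∀ᶠ x in nhds a, q.eval x < 0 :=
      q.continuous.continuousAt.eventually_lt continuousAt_const h
    have h2 : ∀ᶠ x in nhdsWithin a (Set.Iio a), 0 < p.eval x := by
      filter_upwards [h1.filter_mono nhdsWithin_le_nhds, self_mem_nhdsWithin] with x hx hxa
      rw [hev]
      exact mul_pos_of_neg_of_neg (hodd.pow_neg (sub_neg.mpr hxa)) hx
    exact h2.frequently.filter_mono nhdsWithin_le_nhds
  · have h1 : ∀ᶠ x in nhds a, 0 < q.eval x :=
      continuousAt_const.eventually_lt q.continuous.continuousAt h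
    have h2 : ∀ᶠ x in nhdsWithin a (Set.Ioi a), 0 < p.eval x := by
      filter_upwards [h1.filter_mono nhdsWithin_le_nhds, self_mem_nhdsWithin] with x hx hxa
      rw [hev]
      exact mul_pos (pow_pos (sub_pos.mpr hxa) n) hx
    exact h2.frequently.filter_mono nhdsWithin_le_nhds

/-- If `p₁, …, pₘ ∈ ℝ[t]` have positive degrees, every real root of
each `pᵢ` has odd multiplicity, and no two of the `pᵢ` have a common real root, then
the closure of `⋂ᵢ {t : pᵢ(t) > 0}` is `⋂ᵢ {t : pᵢ(t) ≥ 0}`. -/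
theorem closure_inter_pos_sets
    (m : ℕ) (p : Fin m → Polynomial ℝ)
    (hdeg : ∀ i, 0 < (p i).degree)
    (hodd : ∀ i, ∀ a : ℝ, (p i).IsRoot a → Odd ((p i).rootMultiplicity a))
    (hnc : ∀ i j, i ≠ j → ¬ ∃ a : ℝ, (p i).IsRoot a ∧ (p j).IsRoot a) :
    closure (⋂ i, {t : ℝ | 0 < (p i).eval t}) = ⋂ i, {t : ℝ | 0 ≤ (p i).eval t} := by
  apply Set.Subset.antisymm
  · apply closure_minimal
    · refine Set.iInter_mono fun i x hx => ?_
      simp only [Set.mem_ofPred_eq] at hx ⊢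
      exact hx.le
    · exact isClosed_iInter fun i => isClosed_le continuous_const (p i).continuous
  · intro t ht
    simp only [Set.mem_iInter, Set.mem_ofPred_eq] at ht
    by_cases hall : ∀ i, 0 < (p i).eval t
    · apply subset_closure
      simpa using hall
    · push Not at hall
      obtain ⟨i, hi⟩ := hall
      have hroot : (p i).IsRoot t := le_antisymm hi (ht i)
      have hne : p i ≠ 0 := Polynomial.ne_zero_of_degree_gt (hdeg i)
      have hf := freq_pos_near_odd_root (p i) hne t (hodd i t hroot)
      have hothers : ∀ᶠ x in nhds t, ∀ j, j ≠ i → 0 < (p j).eval x := by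
        rw [Filter.eventually_all]
        intro j
        by_cases hj : j = i
        · simp [hj]
        · have hpos : 0 < (p j).eval t :=
            lt_of_le_of_ne (ht j) fun h => hnc j i hj ⟨t, h.symm, hroot⟩
          filter_upwards [continuousAt_const.eventually_lt
            (p j).continuous.continuousAt hpos] with x hx _
          exact hx
      rw [mem_closure_iff_frequently]
      refine (hf.and_eventually hothers).mono ?_
      rintro x ⟨hxi, hxj⟩
      simp only [Set.mem_iInter, Set.mem_ofPred_eq]
      intro j
      by_cases hj : j = i
      · rw [hj]; exact hxi
      · exact hxj j hj
end

section
/- Let p_1, …, p_m and q_1, …, q_l be univariate real polynomials with l ≥ 1, where each q_j is squarefree (every complex root of q_j is simple), and let B = {t ∈ ℝ : p_1(t) > 0, …, p_m(t) > 0, q_1(t) = ⋯ = q_l(t) = 0}. Fix i ∈ {1, …, m}, let w = gcd(p_i, q_1, …, q_l) in ℝ[t], and for each j let q̌_j = q_j / w (an exact division, since w divides q_j). Then: (1) B = {t ∈ ℝ : p_1(t) > 0, …, p_m(t) > 0, q̌_1(t) = ⋯ = q̌_l(t) = 0}; and (2) there is no real number a with p_i(a) = 0 and q̌_1(a) = ⋯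 = q̌_l(a) = 0. -/
open Polynomial

/-- A real univariate polynomial has only simple (complex) roots: it is nonzero and
every complex root has multiplicity at most one. -/
def HasOnlySimpleComplexRoots (p : Polynomial ℝ) : Prop :=
  p ≠ 0 ∧ ∀ a : ℂ, (p.map (algebraMap ℝ ℂ)).rootMultiplicity a ≤ 1

/-- Let `B = {t : p₁(t) > 0, …, pₘ(t) > 0, q₁(t) = ⋯ = q_l(t) = 0}`
with `l ≥ 1` and each `q_j` squarefree.  Fix `i`, let `w = gcd(pᵢ, q₁, …, q_l)` and
`q̌_j = q_j / w`.  Then `B` is also cut out by the `pᵢ' > 0` and `q̌_j = 0`, and no real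
number is simultaneously a root of `pᵢ` and of all the `q̌_j`. -/
theorem remove_common_root_with_variety
    (m l : ℕ) (hl : 0 < l)
    (p : Fin m → Polynomial ℝ) (q : Fin l → Polynomial ℝ)
    (hq : ∀ j, HasOnlySimpleComplexRoots (q j))
    (i : Fin m)
    (w : Polynomial ℝ) (hw : w = gcd (p i) (Finset.univ.gcd q)) :
    ({t : ℝ | (∀ i', 0 < (p i').eval t) ∧ ∀ j, (q j).eval t = 0}
      = {t : ℝ | (∀ i', 0 < (p i').eval t) ∧ ∀ j, (q j / w).eval t = 0}) ∧
    ¬ ∃ a : ℝ, (p i).eval a = 0 ∧ ∀ j, (q j / w).eval a = 0 := by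
  have hwp : w ∣ p i := hw ▸ gcd_dvd_left _ _
  have hwq : ∀ j, w ∣ q j := fun j =>
    hw ▸ (gcd_dvd_right _ _).trans (Finset.gcd_dvd (Finset.mem_univ j))
  have hmul : ∀ j, w * (q j / w) = q j := fun j => EuclideanDomain.mul_div_cancel' (by
    rintro rfl
    exact (hq j).1 (zero_dvd_iff.mp (hwq j))) (hwq j)
  have hev : ∀ j t, (q j).eval t = w.eval t * (q j / w).eval t := fun j t => by
    rw [← eval_mul, hmul]
  refine ⟨?_, ?_⟩
  · ext t
    simp only [Set.mem_setOf_eq]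
    refine and_congr_right fun hp => forall_congr' fun j => ?_
    have hwt : w.eval t ≠ 0 := fun h => by
      obtain ⟨c, hc⟩ := hwp
      have := hp i
      rw [hc, eval_mul, h, zero_mul] at this
      exact lt_irrefl _ this
    rw [hev j t]
    simp [hwt]
  · rintro ⟨a, hpa, hqa⟩
    have hdw : (X - C a) ∣ w := by
      rw [hw]
      refine dvd_gcd (dvd_iff_isRoot.mpr hpa) (Finset.dvd_gcd fun j _ => dvd_iff_isRoot.mpr ?_)
      rw [IsRoot, hev, hqa, mul_zero]
    have h2 : (X - C a) ^ 2 ∣ q ⟨0, hl⟩ := by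
      rw [← hmul, sq]
      exact mul_dvd_mul hdw (dvd_iff_isRoot.mpr (hqa _))
    have h3 := Polynomial.map_dvd (algebraMap ℝ ℂ) h2
    rw [Polynomial.map_pow, Polynomial.map_sub, map_X, map_C] at h3
    have h4 := (le_rootMultiplicity_iff
      ((Polynomial.map_ne_zero_iff (algebraMap ℝ ℂ).injective).mpr (hq ⟨0, hl⟩).1)).mpr h3
    have h5 := (hq ⟨0, hl⟩).2 (algebraMap ℝ ℂ a)
    omega
end

section
/- Let p_1, …, p_m and q_1, …, q_l be univariate real polynomials with l ≥ 1 and each q_j nonzero, and let B = {t ∈ ℝ : p_1(t) > 0, …, p_m(t) > 0, q_1(t) = ⋯ = q_l(t) = 0}. Then there exist univariate real polynomials q̌_1, …, q̌_l such that: (1) B = {t ∈ ℝ : p_1(t) > 0, …, p_m(t) > 0, q̌_1(t) = ⋯ = q̌_l(t) = 0}; and (2) for every i ∈ {1, …, m}, there is no real number a with p_i(a) = 0 and q̌_1(a) = ⋯ = q̌_l(a) = 0. -/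
open Polynomial

/-- Let `B = {t : p₁(t) > 0, …, pₘ(t) > 0, q₁(t) = ⋯ = q_l(t) = 0}`
with `l ≥ 1` and each `q_j` nonzero.  Then there are polynomials `q̌₁, …, q̌_l` cutting
out the same set `B` (together with the inequalities `pᵢ > 0`) such that no `pᵢ` has a
real root lying in the variety of the `q̌_j`. -/
theorem exists_equations_without_common_roots
    (m l : ℕ) (hl : 0 < l)
    (p : Fin m → Polynomial ℝ) (q : Fin l → Polynomial ℝ)
    (hq : ∀ j, q j ≠ 0) :
    ∃ qc : Fin l → Polynomial ℝ,
      ({t : ℝ | (∀ i, 0 < (p i).eval t) ∧ ∀ j, (q j).eval t = 0}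
        = {t : ℝ | (∀ i, 0 < (p i).eval t) ∧ ∀ j, (qc j).eval t = 0}) ∧
      ∀ i, ¬ ∃ a : ℝ, (p i).eval a = 0 ∧ ∀ j, (qc j).eval a = 0 := by
  set B := {t : ℝ | (∀ i, 0 < (p i).eval t) ∧ ∀ j, (q j).eval t = 0} with hB
  have hfin : B.Finite := by
    refine (Polynomial.finite_setOf_isRoot (hq ⟨0, hl⟩)).subset ?_
    intro t ht
    exact ht.2 ⟨0, hl⟩
  have key : ∀ t : ℝ, (∏ b ∈ hfin.toFinset, (X - C b)).eval t = 0 ↔ t ∈ B := by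
    intro t
    rw [Polynomial.eval_prod, Finset.prod_eq_zero_iff]
    constructor
    · rintro ⟨b, hb, h⟩
      have : t = b := by simpa [sub_eq_zero] using h
      rw [this]
      exact hfin.mem_toFinset.1 hb
    · intro h
      exact ⟨t, hfin.mem_toFinset.2 h, by simp⟩
  refine ⟨fun _ => ∏ b ∈ hfin.toFinset, (X - C b), ?_, ?_⟩
  · ext t
    constructor
    · intro h
      exact ⟨h.1, fun _ => (key t).2 h⟩
    · intro h
      exact (key t).1 (h.2 ⟨0, hl⟩)
  · rintro i ⟨a, ha, h⟩
    have := ((key a).1 (h ⟨0, hl⟩)).1 i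
    exact this.ne' ha
end

section
/- Let p_1, …, p_m and q_1, …, q_l be univariate real polynomials, let B = {t ∈ ℝ : p_1(t) > 0, …, p_m(t) > 0, q_1(t) = ⋯ = q_l(t) = 0}, and let s, r be integers with 0 ≤ s < r < m. Assume: (1) each p_i is squarefree; (2) no p_i has a real root a with q_1(a) = ⋯ = q_l(a) = 0; (3) for every pair i ≠ j in {1, …, r}, p_i and p_j have no common complex root; (4) for every i ∈ {1, …, s}, p_{r+1} and p_i have no common complex root. Let u_0 = gcd(p_{s+1}, p_{r+1}), u_{s+1} = p_{s+1}/u_0, and u_{r+1} = p_{r+1}/u_0 (exact divisions). Let B_+ (resp. B_−) be the set obtained from the description of B by replacing the two inequalities p_{s+1} > 0 and p_{r+1} > 0 with the three inequalities u_0 > 0, u_{s+1} > 0, u_{r+1} > 0 (resp. −u_0 > 0, −u_{s+1} > 0, −u_{r+1} > 0), keeping all other inequalities p_i > 0 and all equations q_j = 0. Then B = B_+ ∪ B_−, and moreover: u_0, u_{s+1}, u_{r+1} are squarefree; none of u_0, u_{s+1}, u_{r+1} has a real root a with q_1(a) = ⋯ = q_l(a) = 0; for every i ∈ {1, …, s}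 ∪ {s+2, …, r}, u_0 and p_i have no common complex root and u_{s+1} and p_i have no common complex root; u_0 and u_{s+1} have no common complex root; for every i ∈ {1, …, s}, u_{r+1} and p_i have no common complex root; u_{r+1} and u_0 have no common complex root; and u_{r+1} and u_{s+1} have no common complex root. -/
open Polynomial

/-- Two real univariate polynomials have a common complex root. -/
def HasCommonComplexRoot (p q : Polynomial ℝ) : Prop :=
  ∃ a : ℂ, Polynomial.aeval a p = 0 ∧ Polynomial.aeval a q = 0

theorem simple_left {f g P : Polynomial ℝ} (h : P = f * g)
    (hP : HasOnlySimpleComplexRoots P) : HasOnlySimpleComplexRoots f := by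
  obtain ⟨h0, h1⟩ := hP
  subst h
  refine ⟨left_ne_zero_of_mul h0, fun a => ?_⟩
  have := h1 a
  have hne : (f * g).map (algebraMap ℝ ℂ) ≠ 0 := (Polynomial.map_ne_zero_iff
    (algebraMap ℝ ℂ).injective).2 h0
  rw [Polynomial.map_mul] at this hne
  rw [Polynomial.rootMultiplicity_mul hne] at this
  omega

theorem no_common_of_simple {f g P : Polynomial ℝ} (h : P = f * g)
    (hP : HasOnlySimpleComplexRoots P) : ¬ HasCommonComplexRoot f g := by
  obtain ⟨h0, h1⟩ := hP
  subst h
  rintro ⟨a, hf, hg⟩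
  have := h1 a
  have hne : (f * g).map (algebraMap ℝ ℂ) ≠ 0 := (Polynomial.map_ne_zero_iff
    (algebraMap ℝ ℂ).injective).2 h0
  rw [Polynomial.map_mul] at this hne
  rw [Polynomial.rootMultiplicity_mul hne] at this
  have k1 : 0 < (f.map (algebraMap ℝ ℂ)).rootMultiplicity a := by
    rw [Polynomial.rootMultiplicity_pos (left_ne_zero_of_mul hne), Polynomial.IsRoot,
      Polynomial.eval_map_algebraMap, hf]
  have k2 : 0 < (g.map (algebraMap ℝ ℂ)).rootMultiplicity a := by
    rw [Polynomial.rootMultiplicity_pos (right_ne_zero_of_mul hne), Polynomial.IsRoot,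
      Polynomial.eval_map_algebraMap, hg]
  omega

/-- Splitting an elementary semi-algebraic subset of `ℝ`
(described by `p₁ > 0, …, pₘ > 0, q₁ = ⋯ = q_l = 0`, polynomials indexed `1, …, m`
and `1, …, l`) into two pieces `B₊ ∪ B₋` by factoring out `u₀ = gcd(p_{s+1}, p_{r+1})`,
with `u_{s+1} = p_{s+1}/u₀`, `u_{r+1} = p_{r+1}/u₀`, preserving squarefreeness, absence
of roots in the variety `{q₁ = ⋯ = q_l = 0}`, and absence of common complex roots as
described in the paper. -/
theorem split_off_gcd_of_two_inequalities
    (m l s r : ℕ) (p q : ℕ → Polynomial ℝ)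
    (hsr : s < r) (hrm : r < m)
    (h1 : ∀ i ∈ Finset.Icc 1 m, HasOnlySimpleComplexRoots (p i))
    (h2 : ∀ i ∈ Finset.Icc 1 m,
      ¬ ∃ a : ℝ, (p i).eval a = 0 ∧ ∀ j ∈ Finset.Icc 1 l, (q j).eval a = 0)
    (h3 : ∀ i ∈ Finset.Icc 1 r, ∀ j ∈ Finset.Icc 1 r, i ≠ j →
      ¬ HasCommonComplexRoot (p i) (p j))
    (h4 : ∀ i ∈ Finset.Icc 1 s, ¬ HasCommonComplexRoot (p (r + 1)) (p i))
    (u₀ u₁ u₂ : Polynomial ℝ)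
    (hu₀ : u₀ = gcd (p (s + 1)) (p (r + 1)))
    (hu₁ : u₁ = p (s + 1) / u₀) (hu₂ : u₂ = p (r + 1) / u₀)
    (B Bp Bm : Set ℝ)
    (hB : B = {t | (∀ i ∈ Finset.Icc 1 m, 0 < (p i).eval t) ∧
        ∀ j ∈ Finset.Icc 1 l, (q j).eval t = 0})
    (hBp : Bp = {t | 0 < u₀.eval t ∧ 0 < u₁.eval t ∧ 0 < u₂.eval t ∧
        (∀ i ∈ Finset.Icc 1 m, i ≠ s + 1 → i ≠ r + 1 → 0 < (p i).eval t) ∧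
        ∀ j ∈ Finset.Icc 1 l, (q j).eval t = 0})
    (hBm : Bm = {t | 0 < -u₀.eval t ∧ 0 < -u₁.eval t ∧ 0 < -u₂.eval t ∧
        (∀ i ∈ Finset.Icc 1 m, i ≠ s + 1 → i ≠ r + 1 → 0 < (p i).eval t) ∧
        ∀ j ∈ Finset.Icc 1 l, (q j).eval t = 0}) :
    B = Bp ∪ Bm ∧
    (HasOnlySimpleComplexRoots u₀ ∧ HasOnlySimpleComplexRoots u₁ ∧
      HasOnlySimpleComplexRoots u₂) ∧
    ((¬ ∃ a : ℝ, u₀.eval a = 0 ∧ ∀ j ∈ Finset.Icc 1 l, (q j).eval a = 0) ∧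
      (¬ ∃ a : ℝ, u₁.eval a = 0 ∧ ∀ j ∈ Finset.Icc 1 l, (q j).eval a = 0) ∧
      (¬ ∃ a : ℝ, u₂.eval a = 0 ∧ ∀ j ∈ Finset.Icc 1 l, (q j).eval a = 0)) ∧
    (∀ i ∈ Finset.Icc 1 s ∪ Finset.Icc (s + 2) r,
      ¬ HasCommonComplexRoot u₀ (p i)) ∧
    (∀ i ∈ Finset.Icc 1 s ∪ Finset.Icc (s + 2) r,
      ¬ HasCommonComplexRoot u₁ (p i)) ∧
    (¬ HasCommonComplexRoot u₀ u₁) ∧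
    (∀ i ∈ Finset.Icc 1 s, ¬ HasCommonComplexRoot u₂ (p i)) ∧
    (¬ HasCommonComplexRoot u₂ u₀) ∧
    (¬ HasCommonComplexRoot u₂ u₁) := by
  have hs : s + 1 ∈ Finset.Icc 1 m := by simp; omega
  have hr : r + 1 ∈ Finset.Icc 1 m := by simp; omega
  have d1 : u₀ ∣ p (s + 1) := hu₀ ▸ gcd_dvd_left _ _
  have d2 : u₀ ∣ p (r + 1) := hu₀ ▸ gcd_dvd_right _ _
  have hne : u₀ ≠ 0 := fun h => (h1 _ hs).1 (by rw [h] at d1; exact zero_dvd_iff.1 d1)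
  have e1 : p (s + 1) = u₀ * u₁ := by
    rw [hu₁]; exact (EuclideanDomain.mul_div_cancel' hne d1).symm
  have e2 : p (r + 1) = u₀ * u₂ := by
    rw [hu₂]; exact (EuclideanDomain.mul_div_cancel' hne d2).symm
  obtain ⟨x, y, hxy⟩ := exists_gcd_eq_mul_add_mul (p (s + 1)) (p (r + 1))
  rw [← hu₀, e1, e2] at hxy
  have hb : u₁ * x + u₂ * y = 1 := by
    apply mul_left_cancel₀ hne
    linear_combination -hxy
  have comm1 : ∀ f g h : Polynomial ℝ, (∀ a : ℂ, aeval a f = 0 → aeval a g = 0) →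
      ¬ HasCommonComplexRoot g h → ¬ HasCommonComplexRoot f h := by
    rintro f g h hfg hn ⟨a, ha, hb⟩
    exact hn ⟨a, hfg a ha, hb⟩
  have hmem : ∀ i ∈ Finset.Icc 1 s ∪ Finset.Icc (s + 2) r,
      ¬ HasCommonComplexRoot (p (s + 1)) (p i) := by
    intro i hi
    simp only [Finset.mem_union, Finset.mem_Icc] at hi
    apply h3 <;> (try simp only [Finset.mem_Icc]) <;> omega
  refine ⟨?_, ⟨simple_left e1 (h1 _ hs), simple_left (e1.trans (mul_comm _ _)) (h1 _ hs),
    simple_left (e2.trans (mul_comm _ _)) (h1 _ hr)⟩, ⟨?_, ?_, ?_⟩,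
    fun i hi => comm1 _ _ _ ?_ (hmem i hi), fun i hi => comm1 _ _ _ ?_ (hmem i hi),
    no_common_of_simple e1 (h1 _ hs), fun i hi => comm1 _ _ _ ?_ (h4 i hi),
    no_common_of_simple (e2.trans (mul_comm _ _)) (h1 _ hr), ?_⟩
  · have key : ∀ t, (∀ i ∈ Finset.Icc 1 m, 0 < (p i).eval t) ↔
        (0 < u₀.eval t * u₁.eval t ∧ 0 < u₀.eval t * u₂.eval t ∧
        (∀ i ∈ Finset.Icc 1 m, i ≠ s + 1 → i ≠ r + 1 → 0 < (p i).eval t)) := by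
      intro t
      rw [← eval_mul, ← eval_mul, ← e1, ← e2]
      refine ⟨fun h => ⟨h _ hs, h _ hr, fun i hi _ _ => h i hi⟩, fun ⟨ha, hb, hc⟩ i hi => ?_⟩
      by_cases k1 : i = s + 1
      · rw [k1]; exact ha
      by_cases k2 : i = r + 1
      · rw [k2]; exact hb
      exact hc i hi k1 k2
    ext t
    rw [hB, hBp, hBm]
    simp only [Set.mem_union, Set.mem_ofPred_eq, key, neg_pos, mul_pos_iff]
    have : ¬ (0 < u₀.eval t ∧ u₀.eval t < 0) := fun h => lt_asymm h.1 h.2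
    tauto
  · rintro ⟨a, ha, hq⟩
    exact h2 _ hs ⟨a, by rw [e1, eval_mul, ha, zero_mul], hq⟩
  · rintro ⟨a, ha, hq⟩
    exact h2 _ hs ⟨a, by rw [e1, eval_mul, ha, mul_zero], hq⟩
  · rintro ⟨a, ha, hq⟩
    exact h2 _ hr ⟨a, by rw [e2, eval_mul, ha, mul_zero], hq⟩
  · intro a ha; rw [e1, map_mul, ha, zero_mul]
  · intro a ha; rw [e1, map_mul, ha, mul_zero]
  · intro a ha; rw [e2, map_mul, ha, mul_zero]
  · rintro ⟨a, ha, hb'⟩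
    have := congrArg (aeval a) hb
    simp [ha, hb'] at this
end

section
/- Let p_1, …, p_m and q_1, …, q_l be univariate real polynomials such that each p_i is squarefree and, for every pair i ≠ j, p_i and p_j have no common complex root. Let S = {t ∈ ℝ : p_1(t) ≥ 0, …, p_m(t) ≥ 0, q_1(t) = ⋯ = q_l(t) = 0}. Then: (a) if some q_j is not the zero polynomial, S is a finite set; and (b) if every q_j is the zero polynomial (in particular if l = 0), then S has no isolated points, and for every point a in the frontier of S there exists i ∈ {1, …, m} such that (t − a) divides p_i but (t − a)² does not divide p_i. -/
open Polynomial

theorem not_sq_dvd_aux {p : Polynomial ℝ} (hp : HasOnlySimpleComplexRoots p) (a : ℝ) :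
    ¬ (Polynomial.X - Polynomial.C a) ^ 2 ∣ p := by
  intro h
  have h1 := Polynomial.map_dvd (algebraMap ℝ ℂ) h
  have h0 : p.map (algebraMap ℝ ℂ) ≠ 0 :=
    (Polynomial.map_ne_zero_iff (algebraMap ℝ ℂ).injective).2 hp.1
  rw [Polynomial.map_pow, Polynomial.map_sub, Polynomial.map_X, Polynomial.map_C,
    ← Polynomial.le_rootMultiplicity_iff h0] at h1
  have := hp.2 (algebraMap ℝ ℂ a)
  omega

/-- Let `S = {t : p₁(t) ≥ 0, …, pₘ(t) ≥ 0, q₁(t) = ⋯ = q_l(t) = 0}`,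
where each `pᵢ` is squarefree and no two of the `pᵢ` have a common complex root.
(a) If some `q_j` is nonzero then `S` is finite.
(b) If every `q_j` is the zero polynomial then `S` has no isolated points, and every
point `a` of the frontier of `S` is a simple real root of some `pᵢ`
(`(t - a) ∣ pᵢ` but `(t - a)² ∤ pᵢ`). -/
theorem finite_or_no_isolated_points
    (m l : ℕ) (p : Fin m → Polynomial ℝ) (q : Fin l → Polynomial ℝ)
    (hp : ∀ i, HasOnlySimpleComplexRoots (p i))
    (hnc : ∀ i j, i ≠ j → ¬ HasCommonComplexRoot (p i) (p j))
    (S : Set ℝ)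
    (hS : S = {t | (∀ i, 0 ≤ (p i).eval t) ∧ ∀ j, (q j).eval t = 0}) :
    ((∃ j, q j ≠ 0) → S.Finite) ∧
    ((∀ j, q j = 0) →
      (∀ a ∈ S, a ∈ closure (S \ {a})) ∧
      ∀ a ∈ frontier S, ∃ i,
        (Polynomial.X - Polynomial.C a) ∣ p i ∧
        ¬ (Polynomial.X - Polynomial.C a) ^ 2 ∣ p i) := by
  subst hS
  constructor
  · rintro ⟨j, hj⟩
    refine ((q j).roots.toFinset.finite_toSet).subset ?_
    rintro t ⟨-, ht⟩
    simp [hj, ht j]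
  · intro hq
    have hpos : ∀ (P : Polynomial ℝ) (a : ℝ), 0 < P.eval a →
        ∀ᶠ t in nhds a, 0 < P.eval t := fun P a h =>
      P.continuous.continuousAt.eventually (lt_mem_nhds h)
    have hset : {t : ℝ | (∀ i, 0 ≤ (p i).eval t) ∧ ∀ j, (q j).eval t = 0}
        = {t | ∀ i, 0 ≤ (p i).eval t} := by
      ext t; simp [hq]
    rw [hset]
    have hclosed : IsClosed {t : ℝ | ∀ i, 0 ≤ (p i).eval t} := by
      rw [Set.setOf_forall]
      exact isClosed_iInter fun i => isClosed_le continuous_const (p i).continuous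
    have hnhds : ∀ a : ℝ, (∀ i, 0 < (p i).eval a) →
        {t : ℝ | ∀ i, 0 ≤ (p i).eval t} ∈ nhds a := by
      intro a ha
      have h : ∀ᶠ t in nhds a, ∀ i, 0 < (p i).eval t :=
        Filter.eventually_all.2 fun i => hpos _ _ (ha i)
      filter_upwards [h] with t ht i using (ht i).le
    refine ⟨?_, ?_⟩
    · intro a ha
      by_cases hall : ∀ i, 0 < (p i).eval a
      · rw [mem_closure_iff_frequently]
        have h1 : ∀ᶠ t in nhdsWithin a {a}ᶜ, t ∈ {t : ℝ | ∀ i, 0 ≤ (p i).eval t} \ {a} := by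
          filter_upwards [nhdsWithin_le_nhds (hnhds a hall), self_mem_nhdsWithin] with t h1 h2
          exact ⟨h1, h2⟩
        exact h1.frequently.filter_mono nhdsWithin_le_nhds
      · push Not at hall
        obtain ⟨i, hi⟩ := hall
        have hi0 : (p i).eval a = 0 := le_antisymm hi (ha i)
        have hothers : ∀ᶠ t in nhds a, ∀ j, j ≠ i → 0 < (p j).eval t := by
          refine Filter.eventually_all.2 fun j => ?_
          by_cases hji : j = i
          · simp [hji]
          · have hj : 0 < (p j).eval a := by
              refine lt_of_le_of_ne (ha j) fun h => hnc j i hji ⟨algebraMap ℝ ℂ a, ?_, ?_⟩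
              · rw [Polynomial.aeval_algebraMap_apply_eq_algebraMap_eval, ← h, map_zero]
              · rw [Polynomial.aeval_algebraMap_apply_eq_algebraMap_eval, hi0, map_zero]
            filter_upwards [hpos _ _ hj] with t ht _ using ht
        obtain ⟨r, hr⟩ := Polynomial.dvd_iff_isRoot.2 hi0
        have hra : r.eval a ≠ 0 := by
          intro h
          obtain ⟨s, hs⟩ := Polynomial.dvd_iff_isRoot.2 h
          exact not_sq_dvd_aux (hp i) a ⟨s, by rw [hr, hs]; ring⟩
        have hev : ∀ t, (p i).eval t = (t - a) * r.eval t := by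
          intro t; rw [hr]; simp
        rw [mem_closure_iff_frequently]
        rcases lt_or_gt_of_ne hra with hneg | hposr
        · have h1 : ∀ᶠ t in nhdsWithin a (Set.Iio a),
              t ∈ {t : ℝ | ∀ i, 0 ≤ (p i).eval t} \ {a} := by
            have hr' := hpos (-r) a (by simpa using hneg)
            filter_upwards [nhdsWithin_le_nhds hothers, nhdsWithin_le_nhds hr',
              self_mem_nhdsWithin] with t h1 h2 h3
            have h3' : t < a := h3
            refine ⟨fun j => ?_, h3'.ne⟩
            by_cases hji : j = i
            · subst hji
              rw [hev]
              simp only [Polynomial.eval_neg] at h2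
              nlinarith
            · exact (h1 j hji).le
          exact h1.frequently.filter_mono nhdsWithin_le_nhds
        · have h1 : ∀ᶠ t in nhdsWithin a (Set.Ioi a),
              t ∈ {t : ℝ | ∀ i, 0 ≤ (p i).eval t} \ {a} := by
            filter_upwards [nhdsWithin_le_nhds hothers, nhdsWithin_le_nhds (hpos r a hposr),
              self_mem_nhdsWithin] with t h1 h2 h3
            have h3' : a < t := h3
            refine ⟨fun j => ?_, h3'.ne'⟩
            by_cases hji : j = i
            · subst hji
              rw [hev]
              nlinarith
            · exact (h1 j hji).le
          exact h1.frequently.filter_mono nhdsWithin_le_nhds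
    · intro a ha
      have haS := hclosed.frontier_subset ha
      by_contra hcon
      push Not at hcon
      refine ha.2 (mem_interior_iff_mem_nhds.2 (hnhds a fun i => ?_))
      refine lt_of_le_of_ne (haS i) fun h => ?_
      exact not_sq_dvd_aux (hp i) a (hcon i (Polynomial.dvd_iff_isRoot.2 h.symm))
end

section
/- For every nonzero univariate real polynomial p there exist univariate real polynomials p̃ and w such that: (1) p = p̃ · w; (2) w(t) ≥ 0 for all t ∈ ℝ; (3) p̃ is squarefree; (4) p̃ and p have the same leading coefficient; (5) a complex number a is a root of p̃ if and only if the multiplicity of a as a root of p is odd; and (6) for every t ∈ ℝ, if p(t) > 0 then p̃(t) > 0. -/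
open Polynomial

theorem exists_squarefree_mul_sq_aux (n : ℕ) : ∀ p : Polynomial ℝ, p ≠ 0 → p.natDegree ≤ n →
    ∃ s q : Polynomial ℝ, Squarefree s ∧ q ≠ 0 ∧ p = s * q ^ 2 := by
  induction n with
  | zero =>
    intro p hp hd
    refine ⟨p, 1, ?_, one_ne_zero, by simp⟩
    have : IsUnit p := by
      rw [Polynomial.isUnit_iff_degree_eq_zero, Polynomial.degree_eq_natDegree hp]
      simp [Nat.le_zero.mp hd]
    exact this.squarefree
  | succ n ih =>
    intro p hp hd
    by_cases h : Squarefree p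
    · exact ⟨p, 1, h, one_ne_zero, by simp⟩
    · simp only [Squarefree, not_forall] at h
      obtain ⟨r, ⟨s, hs⟩, hr⟩ := h
      have hr0 : r ≠ 0 := by rintro rfl; simp at hs; exact hp hs
      have hs0 : s ≠ 0 := by rintro rfl; simp at hs; exact hp hs
      have hrd : 0 < r.natDegree := by
        by_contra h0
        apply hr
        rw [Polynomial.isUnit_iff_degree_eq_zero, Polynomial.degree_eq_natDegree hr0]
        simp at h0
        simp [h0]
      have hdeg : p.natDegree = r.natDegree + r.natDegree + s.natDegree := by
        rw [hs, Polynomial.natDegree_mul (mul_ne_zero hr0 hr0) hs0,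
          Polynomial.natDegree_mul hr0 hr0]
      obtain ⟨t, q, ht, hq, e⟩ := ih s hs0 (by omega)
      exact ⟨t, r * q, ht, mul_ne_zero hr0 hq, by rw [hs, e]; ring⟩

/-- Every nonzero `p ∈ ℝ[t]` factors as `p = p̃ · w` with `w ≥ 0`
on `ℝ`, `p̃` squarefree with the same leading coefficient as `p`, whose complex roots
are exactly the roots of `p` of odd multiplicity; moreover `p(t) > 0` implies
`p̃(t) > 0` for real `t`. -/
theorem exists_odd_part
    (p : Polynomial ℝ) (hp : p ≠ 0) :
    ∃ pt w : Polynomial ℝ,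
      p = pt * w ∧
      (∀ t : ℝ, 0 ≤ w.eval t) ∧
      HasOnlySimpleComplexRoots pt ∧
      pt.leadingCoeff = p.leadingCoeff ∧
      (∀ a : ℂ, Polynomial.aeval a pt = 0 ↔
        Odd ((p.map (algebraMap ℝ ℂ)).rootMultiplicity a)) ∧
      (∀ t : ℝ, 0 < p.eval t → 0 < pt.eval t) := by
  obtain ⟨s, q, hs, hq, e⟩ := exists_squarefree_mul_sq_aux _ p hp le_rfl
  have hc : q.leadingCoeff ≠ 0 := Polynomial.leadingCoeff_ne_zero.mpr hq
  obtain ⟨c, hcc⟩ : ∃ c, c = q.leadingCoeff := ⟨_, rfl⟩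
  rw [← hcc] at hc
  have hsq : Squarefree (Polynomial.C (c ^ 2) * s) := by
    have hu : IsUnit (Polynomial.C (c ^ 2)) :=
      Polynomial.isUnit_C.mpr (isUnit_iff_ne_zero.mpr (pow_ne_zero 2 hc))
    exact hs.squarefree_of_dvd ((hu.mul_left_dvd).mpr dvd_rfl)
  have e' : p = (Polynomial.C (c ^ 2) * s) * (Polynomial.C c⁻¹ * q) ^ 2 := by
    have : (Polynomial.C c : Polynomial ℝ) * Polynomial.C c⁻¹ = 1 := by
      rw [← Polynomial.C_mul, mul_inv_cancel₀ hc, Polynomial.C_1]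
    calc p = s * q ^ 2 * (Polynomial.C c * Polynomial.C c⁻¹) ^ 2 := by rw [this, e]; ring
      _ = _ := by rw [Polynomial.C_pow]; ring
  have hlc : (Polynomial.C c⁻¹ * q).leadingCoeff = 1 := by
    rw [Polynomial.leadingCoeff_mul, Polynomial.leadingCoeff_C, ← hcc, inv_mul_cancel₀ hc]
  generalize Polynomial.C (c ^ 2) * s = f at hsq e'
  generalize Polynomial.C c⁻¹ * q = g at hlc e'
  have hf : f ≠ 0 := hsq.ne_zero
  have hg : g ≠ 0 := by rintro rfl; simp at hlc
  have hsep : f.Separable := (PerfectField.separable_iff_squarefree).mpr hsq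
  have hle : ∀ a : ℂ, (f.map (algebraMap ℝ ℂ)).rootMultiplicity a ≤ 1 := fun a =>
    Polynomial.rootMultiplicity_le_one_of_separable (hsep.map) a
  have hinj := (algebraMap ℝ ℂ).injective
  have hfm : f.map (algebraMap ℝ ℂ) ≠ 0 := (Polynomial.map_ne_zero_iff hinj).mpr hf
  have hgm : g.map (algebraMap ℝ ℂ) ≠ 0 := (Polynomial.map_ne_zero_iff hinj).mpr hg
  refine ⟨f, g ^ 2, e', ?_, ⟨hf, hle⟩, ?_, ?_, ?_⟩
  · intro t
    rw [Polynomial.eval_pow]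
    positivity
  · rw [e', Polynomial.leadingCoeff_mul, Polynomial.leadingCoeff_pow, hlc]
    simp
  · intro a
    have h1 : Polynomial.aeval a f = 0 ↔ 0 < (f.map (algebraMap ℝ ℂ)).rootMultiplicity a := by
      rw [Polynomial.rootMultiplicity_pos hfm, Polynomial.IsRoot.def, Polynomial.eval_map_algebraMap]
    have h2 : (p.map (algebraMap ℝ ℂ)).rootMultiplicity a =
        (f.map (algebraMap ℝ ℂ)).rootMultiplicity a +
        2 * (g.map (algebraMap ℝ ℂ)).rootMultiplicity a := by
      rw [e', Polynomial.map_mul, Polynomial.map_pow, pow_two,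
        Polynomial.rootMultiplicity_mul (mul_ne_zero hfm (mul_ne_zero hgm hgm)),
        Polynomial.rootMultiplicity_mul (mul_ne_zero hgm hgm)]
      ring
    have h3 := hle a
    rw [h1, h2, Nat.odd_iff]
    omega
  · intro t ht
    rw [e', Polynomial.eval_mul, Polynomial.eval_pow] at ht
    exact pos_of_mul_pos_left ht (sq_nonneg _)
end

section
/- Let p be a univariate real polynomial of positive degree and let p̃ be a univariate real polynomial such that p̃ is squarefree, p̃ has the same leading coefficient as p, and the complex roots of p̃ are exactly the roots of p of odd multiplicity (so p̃ is the constant lc(p) if p has no root of odd multiplicity). Then the closure of {t ∈ ℝ : p(t) > 0} equals {t ∈ ℝ : p̃(t) ≥ 0}. -/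
open Polynomial

lemma nonneg_of_even_mult (n : ℕ) : ∀ (q : Polynomial ℝ), q.natDegree ≤ n → 0 < q.leadingCoeff →
    (∀ a : ℝ, Even (q.rootMultiplicity a)) → ∀ t : ℝ, 0 ≤ q.eval t := by
  induction n with
  | zero =>
    intro q hq hl _ t
    rw [Polynomial.eq_C_of_natDegree_le_zero hq] at hl ⊢
    simp only [leadingCoeff_C] at hl
    simpa using hl.le
  | succ n ih =>
    intro q hq hl he t
    have hq0 : q ≠ 0 := by
      rintro rfl
      simp at hl
    by_contra! hneg
    have hd : 0 < q.degree := by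
      by_contra! h
      rw [Polynomial.eq_C_of_degree_le_zero h] at hl hneg
      simp only [leadingCoeff_C] at hl
      simp only [eval_C] at hneg
      linarith
    have htend := q.tendsto_atTop_of_leadingCoeff_nonneg hd hl.le
    obtain ⟨s, hs, hts⟩ := ((htend.eventually_ge_atTop 0).and
      (Filter.eventually_ge_atTop t)).exists
    obtain ⟨a, -, ha⟩ := intermediate_value_Icc hts (q.continuous.continuousOn) ⟨hneg.le, hs⟩
    have hpos : 0 < q.rootMultiplicity a := (rootMultiplicity_pos hq0).2 ha
    have h2 : 2 ≤ q.rootMultiplicity a := by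
      obtain ⟨k, hk⟩ := he a
      omega
    obtain ⟨r, hr⟩ := (le_rootMultiplicity_iff hq0).1 h2
    have hmon : ((X - C a) ^ 2 : ℝ[X]).Monic := (monic_X_sub_C a).pow 2
    have hr0 : r ≠ 0 := by
      rintro rfl
      simp at hr
      exact hq0 hr
    have hdeg : q.natDegree = 2 + r.natDegree := by
      rw [hr, hmon.natDegree_mul' hr0, natDegree_pow, natDegree_X_sub_C]
    have hlr : 0 < r.leadingCoeff := by
      rw [hr, leadingCoeff_mul, hmon.leadingCoeff, one_mul] at hl
      exact hl
    have her : ∀ b : ℝ, Even (r.rootMultiplicity b) := by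
      intro b
      have h := he b
      rw [hr, rootMultiplicity_mul (hr ▸ hq0), pow_two,
        rootMultiplicity_mul (mul_ne_zero (X_sub_C_ne_zero a) (X_sub_C_ne_zero a))] at h
      exact (Nat.even_add.1 h).1 ⟨_, rfl⟩
    have := ih r (by omega) hlr her t
    rw [hr] at hneg
    simp only [eval_mul, eval_pow, eval_sub, eval_X, eval_C] at hneg
    nlinarith [mul_nonneg (sq_nonneg (t - a)) this]

/-- Let `p ∈ ℝ[t]` have positive degree and let `p̃ ∈ ℝ[t]` be
squarefree, with the same leading coefficient as `p`, whose complex roots are exactly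
the roots of `p` of odd multiplicity.  Then the closure of `{t : p(t) > 0}` is
`{t : p̃(t) ≥ 0}`. -/
theorem closure_pos_set_eq_odd_part_nonneg
    (p pt : Polynomial ℝ) (hdeg : 0 < p.degree)
    (hsf : HasOnlySimpleComplexRoots pt)
    (hlc : pt.leadingCoeff = p.leadingCoeff)
    (hroots : ∀ a : ℂ, Polynomial.aeval a pt = 0 ↔
      Odd ((p.map (algebraMap ℝ ℂ)).rootMultiplicity a)) :
    closure {t : ℝ | 0 < p.eval t} = {t : ℝ | 0 ≤ pt.eval t} := by
  obtain ⟨hpt0, hs⟩ := hsf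
  have hp0 : p ≠ 0 := by
    rintro rfl
    simp at hdeg
  have hinj : Function.Injective (algebraMap ℝ ℂ) := (algebraMap ℝ ℂ).injective
  have hs' : ∀ a : ℝ, pt.rootMultiplicity a ≤ 1 := fun a => by
    rw [eq_rootMultiplicity_map hinj]; exact hs _
  have hr' : ∀ a : ℝ, pt.IsRoot a ↔ Odd (p.rootMultiplicity a) := fun a => by
    rw [eq_rootMultiplicity_map hinj, ← hroots, aeval_algebraMap_apply]
    simp [IsRoot]
  have hnn : ∀ t, 0 ≤ p.eval t * pt.eval t := by
    intro t
    rw [← eval_mul]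
    refine nonneg_of_even_mult _ (p * pt) le_rfl ?_ ?_ t
    · rw [leadingCoeff_mul, hlc]
      exact mul_self_pos.2 (leadingCoeff_ne_zero.2 hp0)
    · intro a
      rw [rootMultiplicity_mul (mul_ne_zero hp0 hpt0), Nat.even_add', ← hr',
        ← rootMultiplicity_pos hpt0]
      have := hs' a
      constructor
      · intro h
        rw [show pt.rootMultiplicity a = 1 by omega]
        exact odd_one
      · exact fun h => h.pos
  have hpos : {t : ℝ | 0 < pt.eval t} ⊆ closure {t : ℝ | 0 < p.eval t} := by
    have hopen : IsOpen {t : ℝ | 0 < pt.eval t} := isOpen_lt continuous_const pt.continuous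
    have hdense : Dense ({t : ℝ | p.IsRoot t}ᶜ) :=
      (Polynomial.finite_setOfPred_isRoot hp0).countable.dense_compl ℝ
    refine (hdense.open_subset_closure_inter hopen).trans (closure_mono ?_)
    rintro t ⟨h1, h2⟩
    have h1' : 0 < pt.eval t := h1
    exact lt_of_le_of_ne (nonneg_of_mul_nonneg_left (hnn t) h1') (Ne.symm h2)
  apply Set.Subset.antisymm
  · refine closure_minimal ?_ (isClosed_le continuous_const pt.continuous)
    intro t ht
    exact nonneg_of_mul_nonneg_right (hnn t) ht
  · intro t ht
    rcases (show 0 ≤ pt.eval t from ht).lt_or_eq with h | h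
    · exact hpos h
    · refine closure_minimal hpos isClosed_closure ?_
      by_contra hc
      have hmax : IsLocalMax (fun x => pt.eval x) t := by
        have := mem_closure_iff_frequently.not.1 hc
        rw [Filter.not_frequently] at this
        filter_upwards [this] with x hx
        rw [← h]
        exact not_lt.1 hx
      have hd := hmax.deriv_eq_zero
      rw [Polynomial.deriv] at hd
      have := (one_lt_rootMultiplicity_iff_isRoot hpt0).2 ⟨h.symm, hd⟩
      exact absurd (hs' t) (by omega)
end

section
/- Let B ⊆ ℝ be an elementary semi-algebraic set, i.e., B = {t ∈ ℝ : p_1(t) > 0, …, p_m(t) > 0, q_1(t) = ⋯ = q_l(t) = 0} for some univariate real polynomials p_i, q_j. Then there exist finitely many pairs of finite families (P_1, Q_1), …, (P_s, Q_s) of univariate real polynomials such that B = ⋃_{r=1}^{s} B_r, where B_r = {t ∈ ℝ : p(t) > 0 for all p ∈ P_r, and q(t) = 0 for all q ∈ Q_r}, and for each r the following hold: (1) every p ∈ P_r is squarefree; (2) if Q_r is nonempty, then no p ∈ P_r has a real root a with q(a) = 0 for all q ∈ Q_r; and (3) any two distinct members of P_r have no common complex root. -/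
open Polynomial

/-- A set cut out by one family with the required properties. -/
def GoodPiece (A : Set ℝ) : Prop :=
  ∃ (m l : ℕ) (P : Fin m → Polynomial ℝ) (Q : Fin l → Polynomial ℝ),
    A = {t : ℝ | (∀ i, 0 < (P i).eval t) ∧ ∀ j, (Q j).eval t = 0} ∧
    (∀ i, HasOnlySimpleComplexRoots (P i)) ∧
    (0 < l → ∀ i, ¬ ∃ a : ℝ, (P i).eval a = 0 ∧ ∀ j, (Q j).eval a = 0) ∧
    (∀ i j, i ≠ j → ¬ HasCommonComplexRoot (P i) (P j))

lemma simple_X_sub (a : ℝ) : HasOnlySimpleComplexRoots (X - C a) := by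
  refine ⟨X_sub_C_ne_zero a, fun z => ?_⟩
  have h : (X - C a : ℝ[X]).map (algebraMap ℝ ℂ) = X - C (a : ℂ) := by simp
  rw [h, rootMultiplicity_X_sub_C]
  split_ifs <;> simp

lemma simple_sub_X (a : ℝ) : HasOnlySimpleComplexRoots (C a - X) := by
  have h0 : (C a - X : ℝ[X]) ≠ 0 := by
    rw [← neg_sub]; exact neg_ne_zero.2 (X_sub_C_ne_zero a)
  refine ⟨h0, fun z => ?_⟩
  have h1 : (C a - X : ℝ[X]).map (algebraMap ℝ ℂ) ≠ 0 :=
    (Polynomial.map_ne_zero_iff (algebraMap ℝ ℂ).injective).2 h0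
  have h : (C a - X : ℝ[X]).map (algebraMap ℝ ℂ) = C (-1) * (X - C (a : ℂ)) := by simp
  rw [h] at h1 ⊢
  rw [rootMultiplicity_mul h1, rootMultiplicity_C, rootMultiplicity_X_sub_C]
  split_ifs <;> simp

lemma good_univ : GoodPiece Set.univ :=
  ⟨0, 0, Fin.elim0, Fin.elim0, by ext; simp, fun i => i.elim0, fun h => absurd h (by simp),
    fun i => i.elim0⟩

lemma good_singleton (a : ℝ) : GoodPiece {a} :=
  ⟨0, 1, Fin.elim0, fun _ => X - C a, by ext; simp [sub_eq_zero], fun i => i.elim0,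
    fun _ i => i.elim0, fun i => i.elim0⟩

lemma good_Ioi (a : ℝ) : GoodPiece (Set.Ioi a) :=
  ⟨1, 0, fun _ => X - C a, Fin.elim0, by ext; simp, fun _ => simple_X_sub a,
    fun h => absurd h (by simp), fun i j h => absurd (Subsingleton.elim i j) h⟩

lemma good_Iio (a : ℝ) : GoodPiece (Set.Iio a) :=
  ⟨1, 0, fun _ => C a - X, Fin.elim0, by ext; simp, fun _ => simple_sub_X a,
    fun h => absurd h (by simp), fun i j h => absurd (Subsingleton.elim i j) h⟩

lemma good_Ioo (a b : ℝ) (hab : a < b) : GoodPiece (Set.Ioo a b) := by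
  have key : ∀ z : ℂ, z - (a : ℂ) = 0 → (b : ℂ) - z = 0 → False := by
    intro z h1 h2
    have h3 : (a : ℂ) = b := by linear_combination -h1 - h2
    exact hab.ne (by exact_mod_cast h3)
  refine ⟨2, 0, ![X - C a, C b - X], Fin.elim0, by ext; simp [Fin.forall_fin_two], ?_,
    fun h => absurd h (by simp), ?_⟩
  · rw [Fin.forall_fin_two]
    exact ⟨simple_X_sub a, simple_sub_X b⟩
  · intro i j hij
    rintro ⟨z, h1, h2⟩
    fin_cases i <;> fin_cases j <;> simp at hij h1 h2
    · exact key z h1 h2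
    · exact key z h2 h1

lemma good_cover (S : Finset ℝ) (T : Set ℝ)
    (h : ∀ I : Set ℝ, IsPreconnected I → (∀ x ∈ I, x ∉ S) → ∀ t ∈ I, t ∈ T → I ⊆ T) :
    ∃ F : Set (Set ℝ), F.Finite ∧ (∀ A ∈ F, GoodPiece A) ∧ T = ⋃₀ F := by
  classical
  let F0 : Set (Set ℝ) := {Set.univ} ∪ (Set.image (fun a => {a}) (S : Set ℝ)) ∪ (Set.image Set.Ioi (S : Set ℝ))
    ∪ (Set.image Set.Iio (S : Set ℝ)) ∪ (Set.image (fun x : ℝ × ℝ => Set.Ioo x.1 x.2) ((S : Set ℝ) ×ˢ (S : Set ℝ)))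
  have hF0 : F0.Finite := by
    have hS := S.finite_toSet
    exact ((((Set.finite_singleton _).union (hS.image _)).union (hS.image _)).union
      (hS.image _)).union ((hS.prod hS).image _)
  refine ⟨{A | A ∈ F0 ∧ A ⊆ T ∧ A.Nonempty}, hF0.subset fun A hA => hA.1, ?_, ?_⟩
  · rintro A ⟨hA, -, hne⟩
    rcases hA with (((hA | ⟨a, -, rfl⟩) | ⟨a, -, rfl⟩) | ⟨a, -, rfl⟩) | ⟨x, -, rfl⟩
    · rw [Set.mem_singleton_iff.1 hA]; exact good_univ
    · exact good_singleton a
    · exact good_Ioi a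
    · exact good_Iio a
    · exact good_Ioo _ _ (Set.nonempty_Ioo.1 hne)
  · apply Set.Subset.antisymm
    · intro t ht
      suffices hs : ∃ A ∈ F0, t ∈ A ∧ A ⊆ T by
        obtain ⟨A, h1, h2, h3⟩ := hs
        exact ⟨A, ⟨h1, h3, ⟨t, h2⟩⟩, h2⟩
      by_cases htS : t ∈ S
      · exact ⟨{t}, Or.inl (Or.inl (Or.inl (Or.inr ⟨t, htS, rfl⟩))), rfl,
          Set.singleton_subset_iff.2 ht⟩
      have hlow : (∀ x ∈ S, t < x) ∨ ∃ a ∈ S, a < t ∧ ∀ x ∈ S, x ≤ a ∨ t < x := by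
        by_cases hne : (S.filter (· < t)).Nonempty
        · right
          obtain ⟨ha, hat⟩ := Finset.mem_filter.1 (Finset.max'_mem _ hne)
          refine ⟨_, ha, hat, fun x hx => ?_⟩
          rcases lt_trichotomy x t with h1 | h1 | h1
          · exact Or.inl (Finset.le_max' _ _ (Finset.mem_filter.2 ⟨hx, h1⟩))
          · exact absurd (h1 ▸ hx) htS
          · exact Or.inr h1
        · left
          intro x hx
          rcases lt_trichotomy x t with h1 | h1 | h1
          · exact absurd ⟨x, Finset.mem_filter.2 ⟨hx, h1⟩⟩ hne
          · exact absurd (h1 ▸ hx) htS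
          · exact h1
      have hup : (∀ x ∈ S, x < t) ∨ ∃ b ∈ S, t < b ∧ ∀ x ∈ S, b ≤ x ∨ x < t := by
        by_cases hne : (S.filter (t < ·)).Nonempty
        · right
          obtain ⟨ha, hat⟩ := Finset.mem_filter.1 (Finset.min'_mem _ hne)
          refine ⟨_, ha, hat, fun x hx => ?_⟩
          rcases lt_trichotomy x t with h1 | h1 | h1
          · exact Or.inr h1
          · exact absurd (h1 ▸ hx) htS
          · exact Or.inl (Finset.min'_le _ _ (Finset.mem_filter.2 ⟨hx, h1⟩))
        · left
          intro x hx
          rcases lt_trichotomy x t with h1 | h1 | h1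
          · exact h1
          · exact absurd (h1 ▸ hx) htS
          · exact absurd ⟨x, Finset.mem_filter.2 ⟨hx, h1⟩⟩ hne
      rcases hlow with hl | ⟨a, ha, hat, hl⟩ <;> rcases hup with hu | ⟨b, hb, htb, hu⟩
      · refine ⟨Set.univ, Or.inl (Or.inl (Or.inl (Or.inl rfl))), trivial,
          h _ isPreconnected_univ ?_ t trivial ht⟩
        intro x _ hx
        exact lt_asymm (hl x hx) (hu x hx)
      · refine ⟨Set.Iio b, Or.inl (Or.inr ⟨b, hb, rfl⟩), htb,
          h _ isPreconnected_Iio ?_ t htb ht⟩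
        intro x hxb hx
        rw [Set.mem_Iio] at hxb
        have := hl x hx
        rcases hu x hx with h1 | h1 <;> linarith
      · refine ⟨Set.Ioi a, Or.inl (Or.inl (Or.inr ⟨a, ha, rfl⟩)), hat,
          h _ isPreconnected_Ioi ?_ t hat ht⟩
        intro x hxb hx
        rw [Set.mem_Ioi] at hxb
        have := hu x hx
        rcases hl x hx with h1 | h1 <;> linarith
      · refine ⟨Set.Ioo a b, Or.inr ⟨(a, b), ⟨ha, hb⟩, rfl⟩, ⟨hat, htb⟩,
          h _ isPreconnected_Ioo ?_ t ⟨hat, htb⟩ ht⟩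
        rintro x ⟨hx1, hx2⟩ hx
        rcases hl x hx with h1 | h1 <;> rcases hu x hx with h2 | h2 <;> linarith
    · rintro t ⟨A, ⟨-, hA, -⟩, htA⟩
      exact hA htA

/-- Every elementary semi-algebraic subset `B` of `ℝ` is a finite
union of elementary semi-algebraic sets `B_r`, cut out by finite families `P_r`
(strict inequalities) and `Q_r` (equations), such that each member of `P_r` is
squarefree, if `Q_r` is nonempty then no member of `P_r` has a real root in the
variety of `Q_r`, and no two distinct members of `P_r` have a common complex root. -/
theorem decompose_elementary_semialgebraic
    (m l : ℕ) (p : Fin m → Polynomial ℝ) (q : Fin l → Polynomial ℝ)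
    (B : Set ℝ)
    (hB : B = {t | (∀ i, 0 < (p i).eval t) ∧ ∀ j, (q j).eval t = 0}) :
    ∃ (s : ℕ) (mr lr : Fin s → ℕ)
      (P : (r : Fin s) → Fin (mr r) → Polynomial ℝ)
      (Q : (r : Fin s) → Fin (lr r) → Polynomial ℝ),
      (B = ⋃ r, {t : ℝ | (∀ i, 0 < (P r i).eval t) ∧ ∀ j, (Q r j).eval t = 0}) ∧
      ∀ r : Fin s,
        (∀ i, HasOnlySimpleComplexRoots (P r i)) ∧
        (0 < lr r → ∀ i, ¬ ∃ a : ℝ, (P r i).eval a = 0 ∧ ∀ j, (Q r j).eval a = 0) ∧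
        (∀ i j, i ≠ j → ¬ HasCommonComplexRoot (P r i) (P r j)) := by
  classical
  let S : Finset ℝ := (Finset.univ.biUnion fun i => (p i).roots.toFinset) ∪
    (Finset.univ.biUnion fun j => (q j).roots.toFinset)
  obtain ⟨F, hF, hgood, hBF⟩ := good_cover S B (by
    intro I hI hIS t htI htB
    rw [hB] at htB ⊢
    obtain ⟨h1, h2⟩ := htB
    intro x hx
    refine ⟨fun i => ?_, fun j => ?_⟩
    · by_contra hneg
      have hp : p i ≠ 0 := by
        intro h0
        have := h1 i
        simp [h0] at this
      obtain ⟨y, hy, hy0⟩ := hI.intermediate_value hx htI (p i).continuous.continuousOn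
        ⟨not_lt.1 hneg, (h1 i).le⟩
      refine hIS y hy (Finset.mem_union_left _ (Finset.mem_biUnion.2 ⟨i, Finset.mem_univ _, ?_⟩))
      rw [Multiset.mem_toFinset, mem_roots hp]
      exact hy0
    · have hq : q j = 0 := by
        by_contra hq
        refine hIS t htI (Finset.mem_union_right _
          (Finset.mem_biUnion.2 ⟨j, Finset.mem_univ _, ?_⟩))
        rw [Multiset.mem_toFinset, mem_roots hq]
        exact h2 j
      simp [hq])
  have : Fintype F := hF.fintype
  let e := (Fintype.equivFin F).symm
  have hg : ∀ r, GoodPiece (e r : Set ℝ) := fun r => hgood _ (e r).2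
  choose mr lr P Q hA h1 h2 h3 using hg
  refine ⟨Fintype.card F, mr, lr, P, Q, ?_, fun r => ⟨h1 r, h2 r, h3 r⟩⟩
  rw [hBF, Set.sUnion_eq_iUnion, ← e.surjective.iUnion_comp]
  exact Set.iUnion_congr hA
end

section
/- Let n, N ∈ ℕ, let f be a real polynomial in n variables, and let S = ⋃_{u=1}^{N} {x ∈ ℝⁿ : P_{i,u}(x) > 0 for all i, and Q_{k,u}(x) = 0 for all k} for real polynomials P_{i,u}, Q_{k,u} in n variables. Assume that the image f(S) is nonempty and bounded, and set f⋆ = inf{f(x) : x ∈ S}. Then there exist w ∈ ℕ and, for each j = 1, …, w, finite families of univariate real polynomials p^{(j)} = (p_{1,j}, …, p_{m_j,j}) and q^{(j)} = (q_{1,j}, …, q_{l_j,j}), with each p_{i,j} squarefree and any two distinct polynomials among p_{1,j}, …, p_{m_j,j} having no common complex root, such that ⋃_{j=1}^{w} S(p^{(j)}, q^{(j)}) is the closure of f(S), and there exists K ∈ ℕ such that for every k ≥ K, f⋆ = min_{j = 1, …, w} ρ_k(g, p^{(j)}, q^{(j)}), where g is the identity polynomial g(t) = t and ρ_k(g, p^{(j)},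 q^{(j)}) = sup{λ ∈ ℝ : g − λ ∈ T_k(p^{(j)}, q^{(j)})}. -/
open Polynomial

/-- A univariate real polynomial is a (finite) sum of squares of real polynomials. -/
def IsSumOfSquaresPoly (σ : Polynomial ℝ) : Prop :=
  ∃ (r : ℕ) (h : Fin r → Polynomial ℝ), σ = ∑ i, (h i) ^ 2

/-- Membership in the truncated preordering `T_k(p, q)`: `f` can be written as
`Σ_{α ∈ {0,1}^m} σ_α p₁^{α₁} ⋯ pₘ^{αₘ} + Σ_j ψ_j q_j` with each `σ_α` a sum of
squares, `deg(σ_α p^α) ≤ 2k` and `deg(ψ_j q_j) ≤ 2k`. -/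
def MemTrunc {m l : ℕ} (k : ℕ) (p : Fin m → Polynomial ℝ) (q : Fin l → Polynomial ℝ)
    (f : Polynomial ℝ) : Prop :=
  ∃ (σ : (Fin m → Bool) → Polynomial ℝ) (ψ : Fin l → Polynomial ℝ),
    (∀ α, IsSumOfSquaresPoly (σ α)) ∧
    (∀ α, (σ α * ∏ i, if α i then p i else 1).degree ≤ (2 * k : ℕ)) ∧
    (∀ j, (ψ j * q j).degree ≤ (2 * k : ℕ)) ∧
    f = (∑ α, σ α * ∏ i, if α i then p i else 1) + ∑ j, ψ j * q j

lemma exists_move_up (c u v d : ℝ) (hcu : c < u) (huv : u ≤ v) (hvd : v < d) :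
    ∃ g : ℝ ≃o ℝ, g u = v ∧ ∀ x, (x ≤ c ∨ d ≤ x) → g x = x := by
  have h1 : 0 < u - c := by linarith
  have h2 : 0 < d - u := by linarith
  set s1 := (v - c) / (u - c) with hs1
  set s2 := (d - v) / (d - u) with hs2
  have e1 : s1 * (u - c) = v - c := by rw [hs1]; field_simp
  have e2 : s2 * (d - u) = d - v := by rw [hs2]; field_simp
  have g1 : 1 ≤ s1 := by rw [hs1, le_div_iff₀ h1]; linarith
  have g2 : s2 ≤ 1 := by rw [hs2, div_le_iff₀ h2]; linarith
  have g3 : 0 < s2 := by rw [hs2]; apply div_pos <;> linarith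
  let g : ℝ → ℝ := fun x => max x (min (c + s1 * (x - c)) (d + s2 * (x - d)))
  have hout : ∀ x, (x ≤ c ∨ d ≤ x) → g x = x := by
    intro x hx
    apply max_eq_left
    rcases hx with hx | hx
    · apply min_le_of_left_le; nlinarith
    · apply min_le_of_right_le; nlinarith
  have hmono : StrictMono g := by
    intro x y hxy
    apply max_lt_max hxy
    apply min_lt_min <;> nlinarith
  have hcont : Continuous g := by fun_prop
  have hsurj : Function.Surjective g := by
    apply hcont.surjective
    · exact Filter.tendsto_atTop_mono (fun x => le_max_left _ _) Filter.tendsto_id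
    · refine Filter.Tendsto.congr' ?_ Filter.tendsto_id
      filter_upwards [Filter.eventually_le_atBot c] with x hx
      exact (hout x (Or.inl hx)).symm
  refine ⟨hmono.orderIsoOfSurjective g hsurj, ?_, ?_⟩
  · show g u = v
    have : d + s2 * (u - d) = v := by linarith
    have h' : c + s1 * (u - c) = v := by linarith
    simp only [g]; rw [this, h', min_self, max_eq_right huv]
  · exact hout

lemma exists_move (c u v d : ℝ) (hcu : c < u) (hcv : c < v) (hud : u < d) (hvd : v < d) :
    ∃ g : ℝ ≃o ℝ, g u = v ∧ ∀ x, (x ≤ c ∨ d ≤ x) → g x = x := by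
  rcases le_total u v with h | h
  · exact exists_move_up c u v d hcu h hvd
  · obtain ⟨g, hg, hx⟩ := exists_move_up c v u d hcv h hud
    refine ⟨g.symm, ?_, ?_⟩
    · rw [← hg]; simp
    · intro x h
      rw [OrderIso.symm_apply_eq]; exact (hx x h).symm

def SameMono (u v : ℝ → ℝ) (s : Set ℝ) : Prop :=
  (StrictMonoOn u s ∧ StrictMonoOn v s) ∨ (StrictAntiOn u s ∧ StrictAntiOn v s)

lemma local_root_mono (u v : ℝ → ℝ) (hv : Continuous v) (a b z : ℝ)
    (ha : SignType.sign (u a) = SignType.sign (v a))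
    (hb : SignType.sign (u b) = SignType.sign (v b)) (hz : z ∈ Set.Ioo a b) (huz : u z = 0)
    (hm : StrictMonoOn u (Set.Icc a b)) : ∃ z' ∈ Set.Ioo a b, v z' = 0 := by
  have hab : a < b := hz.1.trans hz.2
  have h1 : u a < 0 := by
    rw [← huz]; exact hm ⟨le_rfl, hab.le⟩ ⟨hz.1.le, hz.2.le⟩ hz.1
  have h2 : 0 < u b := by
    rw [← huz]; exact hm ⟨hz.1.le, hz.2.le⟩ ⟨hab.le, le_rfl⟩ hz.2
  have h3 : v a < 0 := by rwa [← sign_eq_neg_one_iff, ← ha, sign_eq_neg_one_iff]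
  have h4 : 0 < v b := by rwa [← sign_eq_one_iff, ← hb, sign_eq_one_iff]
  obtain ⟨z', hz', h⟩ := intermediate_value_Ioo hab.le hv.continuousOn ⟨h3, h4⟩
  exact ⟨z', hz', h⟩

lemma sign_neg_eq (x y : ℝ) (h : SignType.sign x = SignType.sign y) :
    SignType.sign (-x) = SignType.sign (-y) := by
  rw [Left.sign_neg, Left.sign_neg, h]

lemma local_root (u v : ℝ → ℝ) (hv : Continuous v) (a b z : ℝ)
    (ha : SignType.sign (u a) = SignType.sign (v a))
    (hb : SignType.sign (u b) = SignType.sign (v b)) (hz : z ∈ Set.Ioo a b) (huz : u z = 0)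
    (hm : SameMono u v (Set.Icc a b)) : ∃ z' ∈ Set.Ioo a b, v z' = 0 := by
  rcases hm with h | h
  · exact local_root_mono u v hv a b z ha hb hz huz h.1
  · obtain ⟨z', hz', h⟩ := local_root_mono (fun x => - u x) (fun x => - v x) hv.neg a b z
      (sign_neg_eq _ _ ha) (sign_neg_eq _ _ hb) hz (by simp [huz]) h.1.neg
    exact ⟨z', hz', by simpa using h⟩

lemma local_sign_mono (u v : ℝ → ℝ) (hu : Continuous u) (a b y y' : ℝ)
    (ha : SignType.sign (u a) = SignType.sign (v a))
    (hb : SignType.sign (u b) = SignType.sign (v b)) (hy : y ∈ Set.Ioo a b)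
    (hy' : y' ∈ Set.Ioo a b)
    (hm : StrictMonoOn u (Set.Icc a b)) (hm' : StrictMonoOn v (Set.Icc a b))
    (H : (∃ z ∈ Set.Ioo a b, ∃ z' ∈ Set.Ioo a b, u z = 0 ∧ v z' = 0 ∧ (y < z ↔ y' < z') ∧
      (z < y ↔ z' < y')) ∨ ∀ z ∈ Set.Ioo a b, u z ≠ 0) :
    SignType.sign (u y) = SignType.sign (v y') := by
  have hab : a < b := hy.1.trans hy.2
  have I := Set.Ioo_subset_Icc_self (a := a) (b := b)
  rcases H with ⟨z, hz, z', hz', h1, h2, h3, h4⟩ | H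
  · rcases lt_trichotomy y z with h | h | h
    · have A := hm (I hy) (I hz) h
      have B := hm' (I hy') (I hz') (h3.1 h)
      rw [h1] at A; rw [h2] at B
      rw [sign_neg A, sign_neg B]
    · have : y' = z' := by
        apply le_antisymm
        · exact not_lt.1 fun hh => (lt_irrefl z (h ▸ h4.2 hh))
        · exact not_lt.1 fun hh => (lt_irrefl z (h ▸ h3.2 hh))
      rw [h, this, h1, h2]
    · have A := hm (I hz) (I hy) h
      have B := hm' (I hz') (I hy') (h4.1 h)
      rw [h1] at A; rw [h2] at B
      rw [sign_pos A, sign_pos B]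
  · have la : a ∈ Set.Icc a b := ⟨le_rfl, hab.le⟩
    have lb : b ∈ Set.Icc a b := ⟨hab.le, le_rfl⟩
    by_cases c1 : 0 ≤ u a
    · have c2 : 0 ≤ v a := by rwa [← sign_nonneg_iff, ← ha, sign_nonneg_iff]
      rw [sign_pos (c1.trans_lt (hm la (I hy) hy.1)), sign_pos (c2.trans_lt (hm' la (I hy') hy'.1))]
    by_cases c3 : u b ≤ 0
    · have c2 : v b ≤ 0 := by rwa [← sign_nonpos_iff, ← hb, sign_nonpos_iff]
      rw [sign_neg ((hm (I hy) lb hy.2).trans_le c3), sign_neg ((hm' (I hy') lb hy'.2).trans_le c2)]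
    push Not at c1 c3
    obtain ⟨z', hz', h⟩ := intermediate_value_Ioo hab.le hu.continuousOn ⟨c1, c3⟩
    exact absurd h (H z' hz')

lemma local_sign (u v : ℝ → ℝ) (hu : Continuous u) (a b y y' : ℝ)
    (ha : SignType.sign (u a) = SignType.sign (v a))
    (hb : SignType.sign (u b) = SignType.sign (v b)) (hy : y ∈ Set.Ioo a b)
    (hy' : y' ∈ Set.Ioo a b)
    (hm : SameMono u v (Set.Icc a b))
    (H : (∃ z ∈ Set.Ioo a b, ∃ z' ∈ Set.Ioo a b, u z = 0 ∧ v z' = 0 ∧ (y < z ↔ y' < z') ∧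
      (z < y ↔ z' < y')) ∨ ∀ z ∈ Set.Ioo a b, u z ≠ 0) :
    SignType.sign (u y) = SignType.sign (v y') := by
  rcases hm with h | h
  · exact local_sign_mono u v hu a b y y' ha hb hy hy' h.1 h.2 H
  · have := local_sign_mono (fun x => - u x) (fun x => - v x) hu.neg a b y y'
      (sign_neg_eq _ _ ha) (sign_neg_eq _ _ hb) hy hy' h.1.neg h.2.neg (by simpa using H)
    simpa using sign_neg_eq _ _ this

/-- consecutive elements of a finite set around a point -/
lemma exists_consecutive (F : Set ℝ) (hF : F.Finite) (y : ℝ) (hy : y ∉ F)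
    (hlo : ∃ c ∈ F, c < y) (hhi : ∃ c ∈ F, y < c) :
    ∃ a ∈ F, ∃ b ∈ F, a < y ∧ y < b ∧ ∀ c ∈ F, ¬ (a < c ∧ c < b) := by
  obtain ⟨a, ha, ha'⟩ := Set.exists_max_image (F ∩ {c | c < y}) id (hF.subset Set.inter_subset_left)
    (by obtain ⟨c, h1, h2⟩ := hlo; exact ⟨c, h1, h2⟩)
  obtain ⟨b, hb, hb'⟩ := Set.exists_min_image (F ∩ {c | y < c}) id (hF.subset Set.inter_subset_left)
    (by obtain ⟨c, h1, h2⟩ := hhi; exact ⟨c, h1, h2⟩)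
  refine ⟨a, ha.1, b, hb.1, ha.2, hb.2, ?_⟩
  rintro c hc ⟨h1, h2⟩
  rcases lt_trichotomy c y with h | h | h
  · exact absurd (ha' c ⟨hc, h⟩) (not_le.2 h1)
  · exact hy (h ▸ hc)
  · exact absurd (hb' c ⟨hc, h⟩) (not_le.2 h2)

lemma exists_align (u v : ℝ → ℝ) (hu : Continuous u) (hv : Continuous v) (F : Set ℝ)
    (hF : F.Finite) (hs : ∀ c ∈ F, SignType.sign (u c) = SignType.sign (v c))
    (lo hi : ℝ) (hlo : lo ∈ F) (hhi : hi ∈ F)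
    (Hlo : ∀ y z, y ≤ lo → z ≤ lo → SignType.sign (u y) = SignType.sign (v z))
    (Hhi : ∀ y z, hi ≤ y → hi ≤ z → SignType.sign (u y) = SignType.sign (v z))
    (hm : ∀ a ∈ F, ∀ b ∈ F, a < b → (∀ c ∈ F, ¬ (a < c ∧ c < b)) → SameMono u v (Set.Icc a b))
    (hZ : {x | u x = 0}.Finite) :
    ∃ g : ℝ ≃o ℝ, (∀ c ∈ F, g c = c) ∧ ∀ y, SignType.sign (u y) = SignType.sign (v (g y)) := by
  have key : ∀ Z : Set ℝ, Z.Finite → Z ⊆ {x | u x = 0 ∧ x ∉ F ∧ lo < x ∧ x < hi} →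
      ∃ g : ℝ ≃o ℝ, (∀ c ∈ F, g c = c) ∧ ∀ z ∈ Z, v (g z) = 0 := by
    intro Z hZf
    induction Z, hZf using Set.Finite.induction_on with
    | empty => intro _; exact ⟨OrderIso.refl ℝ, fun _ _ => rfl, by simp⟩
    | @insert z Z hz hZf ih =>
      intro hsub
      obtain ⟨g, hg, hgz⟩ := ih ((Set.subset_insert _ _).trans hsub)
      obtain ⟨h1, h2, h3, h4⟩ := hsub (Set.mem_insert z Z)
      obtain ⟨a, ha, b, hb, haz, hzb, hcons⟩ := exists_consecutive F hF z h2 ⟨lo, hlo, h3⟩ ⟨hi, hhi, h4⟩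
      have hmab := hm a ha b hb (haz.trans hzb) hcons
      obtain ⟨z2, hz2, hvz2⟩ := local_root u v hv a b z (hs a ha) (hs b hb) ⟨haz, hzb⟩ h1 hmab
      have h5 : a < g.symm z2 := by rw [OrderIso.lt_symm_apply, hg a ha]; exact hz2.1
      have h6 : g.symm z2 < b := by rw [OrderIso.symm_apply_lt, hg b hb]; exact hz2.2
      obtain ⟨k, hk, hkout⟩ := exists_move a z (g.symm z2) b haz h5 hzb h6
      refine ⟨k.trans g, ?_, ?_⟩
      · intro c hc
        rw [OrderIso.trans_apply, hkout c, hg c hc]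
        have := hcons c hc
        by_contra hcon
        push Not at hcon
        exact this hcon
      · intro y hy
        rcases hy with rfl | hy
        · rw [OrderIso.trans_apply, hk]; simpa using hvz2
        · rw [OrderIso.trans_apply, hkout y, hgz y hy]
          by_contra hcon
          push Not at hcon
          have e1 : u y = 0 := (hsub (Set.mem_insert_of_mem z hy)).1
          have inj : Set.InjOn u (Set.Icc a b) := by
            rcases hmab with h | h
            · exact h.1.injOn
            · exact h.1.injOn
          have : y = z := inj ⟨hcon.1.le, hcon.2.le⟩ ⟨haz.le, hzb.le⟩ (e1.trans h1.symm)
          exact hz (this ▸ hy)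
  obtain ⟨g, hg, hgz⟩ := key {x | u x = 0 ∧ x ∉ F ∧ lo < x ∧ x < hi}
    (hZ.subset fun x hx => hx.1) subset_rfl
  refine ⟨g, hg, fun y => ?_⟩
  by_cases hyF : y ∈ F
  · rw [hg y hyF]; exact hs y hyF
  rcases le_or_gt y lo with h | h
  · exact Hlo _ _ h (by rw [← hg lo hlo]; exact g.monotone h)
  rcases le_or_gt hi y with h' | h'
  · exact Hhi _ _ h' (by rw [← hg hi hhi]; exact g.monotone h')
  obtain ⟨a, ha, b, hb, hay, hyb, hcons⟩ := exists_consecutive F hF y hyF ⟨lo, hlo, h⟩ ⟨hi, hhi, h'⟩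
  have hfix : ∀ x, x ∈ Set.Ioo a b → g x ∈ Set.Ioo a b := by
    intro x hx
    constructor
    · rw [← hg a ha]; exact g.strictMono hx.1
    · rw [← hg b hb]; exact g.strictMono hx.2
  have hloa : lo ≤ a := not_lt.1 fun hh => by
    have := hcons lo hlo
    rcases lt_trichotomy a lo with h7 | h7 | h7
    · exact this ⟨h7, h.trans hyb⟩
    · exact hh.ne' h7.symm
    · exact absurd hh (by linarith)
  have hbhi : b ≤ hi := not_lt.1 fun hh => hcons hi hhi ⟨hay.trans h', hh⟩
  apply local_sign u v hu a b y (g y) (hs a ha) (hs b hb) ⟨hay, hyb⟩ (hfix y ⟨hay, hyb⟩)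
    (hm a ha b hb (hay.trans hyb) hcons)
  by_cases hex : ∃ z ∈ Set.Ioo a b, u z = 0
  · left
    obtain ⟨z, hz, huz⟩ := hex
    refine ⟨z, hz, g z, hfix z hz, huz, hgz z ⟨huz, fun hzF => hcons z hzF hz, ?_, ?_⟩, ?_, ?_⟩
    · exact hloa.trans_lt hz.1
    · exact hz.2.trans_le hbhi
    · simp
    · simp
  · right
    push Not at hex
    exact hex

lemma pseudo_rem {A : Type*} [CommRing A] (q : A[X]) (j : ℕ) (hq : q.degree ≤ j) (p : A[X]) :
    ∃ (k : ℕ) (a r : A[X]), C (q.coeff j) ^ k * p = a * q + r ∧ r.degree < j := by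
  have key : ∀ n : ℕ, ∀ p : A[X], p.degree < n →
      ∃ (k : ℕ) (a r : A[X]), C (q.coeff j) ^ k * p = a * q + r ∧ r.degree < j := by
    intro n
    induction n with
    | zero =>
      intro p hp
      exact ⟨0, 0, p, by simp, hp.trans_le (by exact_mod_cast Nat.zero_le j)⟩
    | succ n ih =>
      intro p hp
      rcases Nat.lt_or_ge n j with h | h
      · exact ⟨0, 0, p, by simp, hp.trans_le (by exact_mod_cast h)⟩
      · obtain ⟨k, a, r, h1, h2⟩ := ih (C (q.coeff j) * p - C (p.coeff n) * X ^ (n - j) * q) (by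
          rw [degree_lt_iff_coeff_zero] at hp ⊢
          intro m hm
          rw [mul_assoc, coeff_sub, coeff_C_mul, coeff_C_mul, coeff_X_pow_mul', if_pos (by omega)]
          rcases hm.eq_or_lt with rfl | hm
          · rw [show n - (n - j) = j by omega]; ring
          · rw [hp m (by omega), coeff_eq_zero_of_degree_lt (p := q) (n := m - (n - j)), mul_zero, mul_zero,
              sub_self]
            refine hq.trans_lt ?_
            exact_mod_cast (by omega : j < m - (n - j)))
        refine ⟨k + 1, a + C (q.coeff j) ^ k * (C (p.coeff n) * X ^ (n - j)), r, ?_, h2⟩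
        linear_combination h1
  refine key (p.natDegree + 1) p (lt_of_le_of_lt degree_le_natDegree ?_)
  exact_mod_cast Nat.lt_succ_self _

lemma sign_hi (P : ℝ[X]) (hd : 0 < P.natDegree) :
    ∃ hi : ℝ, ∀ y, hi ≤ y → SignType.sign (P.eval y) = SignType.sign P.leadingCoeff := by
  have key : ∀ P : ℝ[X], 0 < P.natDegree → 0 < P.leadingCoeff →
      ∃ hi : ℝ, ∀ y, hi ≤ y → 0 < P.eval y := by
    intro P hd hl
    have := P.tendsto_atTop_of_leadingCoeff_nonneg (natDegree_pos_iff_degree_pos.1 hd) hl.le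
    exact Filter.eventually_atTop.1 (this.eventually_gt_atTop 0)
  have hne : P.leadingCoeff ≠ 0 := leadingCoeff_ne_zero.2 (by rintro rfl; simp at hd)
  rcases lt_or_gt_of_ne hne with h | h
  · obtain ⟨hi, H⟩ := key (-P) (by simpa using hd) (by simpa using h)
    refine ⟨hi, fun y hy => ?_⟩
    have := H y hy
    rw [eval_neg] at this
    rw [sign_neg h, sign_neg (by linarith)]
  · obtain ⟨hi, H⟩ := key P hd h
    refine ⟨hi, fun y hy => ?_⟩
    rw [sign_pos h, sign_pos (H y hy)]

lemma sign_lo (P : ℝ[X]) (hd : 0 < P.natDegree) :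
    ∃ lo : ℝ, ∀ y, y ≤ lo → SignType.sign (P.eval y) =
      SignType.sign P.leadingCoeff * SignType.sign ((-1 : ℝ) ^ P.natDegree) := by
  have hX : (-X : ℝ[X]).natDegree = 1 := by simp
  obtain ⟨hi, H⟩ := sign_hi (P.comp (-X)) (by rw [natDegree_comp, hX]; simpa using hd)
  refine ⟨-hi, fun y hy => ?_⟩
  have := H (-y) (by linarith)
  rw [eval_comp, leadingCoeff_comp (by rw [hX]; norm_num)] at this
  simpa [sign_mul] using this

lemma sameMono_poly (P Q : ℝ[X]) (h : ℝ ≃o ℝ) (a b : ℝ)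
    (hs : ∀ y, SignType.sign (P.derivative.eval y) = SignType.sign (Q.derivative.eval (h y)))
    (hr : ∀ y ∈ Set.Ioo a b, P.derivative.eval y ≠ 0) :
    SameMono (fun y => P.eval y) (fun y => Q.eval (h y)) (Set.Icc a b) := by
  have conn : (∀ y ∈ Set.Ioo a b, 0 < P.derivative.eval y) ∨
      (∀ y ∈ Set.Ioo a b, P.derivative.eval y < 0) := by
    by_contra hcon
    push Not at hcon
    obtain ⟨⟨y, hy, h1⟩, z, hz, h2⟩ := hcon
    have := (isPreconnected_Ioo (a := a) (b := b)).intermediate_value hy hz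
      P.derivative.continuous.continuousOn ⟨h1, h2⟩
    obtain ⟨x, hx, hx'⟩ := this
    exact hr x hx hx'
  have hmap : ∀ z ∈ Set.Ioo (h a) (h b), h.symm z ∈ Set.Ioo a b := by
    intro z hz
    exact ⟨by rw [OrderIso.lt_symm_apply]; exact hz.1, by rw [OrderIso.symm_apply_lt]; exact hz.2⟩
  have hmap2 : ∀ z ∈ Set.Icc a b, h z ∈ Set.Icc (h a) (h b) := by
    intro z hz
    exact ⟨h.monotone hz.1, h.monotone hz.2⟩
  rcases conn with c | c
  · left
    constructor
    · apply strictMonoOn_of_deriv_pos (convex_Icc a b) P.continuous.continuousOn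
      intro x hx
      rw [interior_Icc] at hx
      rw [Polynomial.deriv]; exact c x hx
    · have : StrictMonoOn (fun y => Q.eval y) (Set.Icc (h a) (h b)) := by
        apply strictMonoOn_of_deriv_pos (convex_Icc _ _) Q.continuous.continuousOn
        intro x hx
        rw [interior_Icc] at hx
        rw [Polynomial.deriv]
        have := hs (h.symm x)
        rw [sign_pos (c _ (hmap x hx)), OrderIso.apply_symm_apply] at this
        exact sign_eq_one_iff.1 this.symm
      intro x hx y hy hxy
      exact this (hmap2 x hx) (hmap2 y hy) (h.strictMono hxy)
  · right
    constructor
    · apply strictAntiOn_of_deriv_neg (convex_Icc a b) P.continuous.continuousOn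
      intro x hx
      rw [interior_Icc] at hx
      rw [Polynomial.deriv]; exact c x hx
    · have : StrictAntiOn (fun y => Q.eval y) (Set.Icc (h a) (h b)) := by
        apply strictAntiOn_of_deriv_neg (convex_Icc _ _) Q.continuous.continuousOn
        intro x hx
        rw [interior_Icc] at hx
        rw [Polynomial.deriv]
        have := hs (h.symm x)
        rw [sign_neg (c _ (hmap x hx)), OrderIso.apply_symm_apply] at this
        exact sign_eq_neg_one_iff.1 this.symm
      intro x hx y hy hxy
      exact this (hmap2 x hx) (hmap2 y hy) (h.strictMono hxy)

/-- The core real step: extend a sign preserving order isomorphism to one more polynomial. -/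
lemma extend_iso {ι : Type*} (B : Set ι) (hB : B.Finite) (Pf Qf : ι → ℝ[X]) (h : ℝ ≃o ℝ)
    (hs : ∀ i ∈ B, ∀ y, SignType.sign ((Pf i).eval y) = SignType.sign ((Qf i).eval (h y)))
    (P Q : ℝ[X]) (hd : 0 < P.natDegree) (hd' : Q.natDegree = P.natDegree)
    (hlc : SignType.sign P.leadingCoeff = SignType.sign Q.leadingCoeff)
    (i0 : ι) (hi0 : i0 ∈ B) (hP0 : Pf i0 = P.derivative) (hQ0 : Qf i0 = Q.derivative)
    (hroot : ∀ i ∈ B, Pf i ≠ 0 → ∀ y, (Pf i).eval y = 0 →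
      SignType.sign (P.eval y) = SignType.sign (Q.eval (h y))) :
    ∃ h' : ℝ ≃o ℝ, (∀ y, SignType.sign (P.eval y) = SignType.sign (Q.eval (h' y))) ∧
      ∀ i ∈ B, ∀ y, SignType.sign ((Pf i).eval y) = SignType.sign ((Qf i).eval (h' y)) := by
  obtain ⟨hi1, H1⟩ := sign_hi P hd
  obtain ⟨hi2, H2⟩ := sign_hi Q (hd'.symm ▸ hd)
  obtain ⟨lo1, L1⟩ := sign_lo P hd
  obtain ⟨lo2, L2⟩ := sign_lo Q (hd'.symm ▸ hd)
  set hi := max hi1 (h.symm hi2)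
  set lo := min lo1 (h.symm lo2)
  have Hhi : ∀ y z, hi ≤ y → hi ≤ z →
      SignType.sign (P.eval y) = SignType.sign (Q.eval (h z)) := by
    intro y z hy hz
    rw [H1 y ((le_max_left _ _).trans hy), H2 (h z), hlc]
    rw [← OrderIso.symm_apply_le]; exact (le_max_right _ _).trans hz
  have Hlo : ∀ y z, y ≤ lo → z ≤ lo →
      SignType.sign (P.eval y) = SignType.sign (Q.eval (h z)) := by
    intro y z hy hz
    rw [L1 y (hy.trans (min_le_left _ _)), L2 (h z), hlc, hd']
    rw [← OrderIso.le_symm_apply]; exact hz.trans (min_le_right _ _)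
  have hP0' : P.derivative ≠ 0 := by
    intro h0
    have := derivative_eq_zero.1 h0
    omega
  have hPne : P ≠ 0 := by rintro rfl; simp at hd
  set R : Set ℝ := ⋃ i ∈ {i ∈ B | Pf i ≠ 0}, {y | (Pf i).eval y = 0} with hR
  have hRfin : R.Finite := by
    apply Set.Finite.biUnion (hB.subset fun i hi => hi.1)
    intro i hi
    exact (finite_setOfPred_isRoot hi.2)
  have hRmem : ∀ i ∈ B, Pf i ≠ 0 → ∀ y, (Pf i).eval y = 0 → y ∈ R := by
    intro i hi hne y hy
    exact Set.mem_biUnion (show i ∈ {i ∈ B | Pf i ≠ 0} from ⟨hi, hne⟩) hy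
  set F : Set ℝ := insert lo (insert hi R) with hF
  have hRF : R ⊆ F := fun x hx => Or.inr (Or.inr hx)
  obtain ⟨g, hg, hgs⟩ := exists_align (fun y => P.eval y) (fun y => Q.eval (h y)) P.continuous
    (Q.continuous.comp h.continuous) F ((hRfin.insert _).insert _) (by
      rintro c (rfl | rfl | hc)
      · exact Hlo _ _ le_rfl le_rfl
      · exact Hhi _ _ le_rfl le_rfl
      · simp only [hR, Set.mem_iUnion] at hc
        obtain ⟨i, hi, hc⟩ := hc
        exact hroot i hi.1 hi.2 c hc) lo hi (Or.inl rfl) (Or.inr (Or.inl rfl)) Hlo Hhi (by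
      intro a ha b hb hab hcons
      apply sameMono_poly
      · intro y; rw [← hP0, ← hQ0]; exact hs i0 hi0 y
      · intro y hy hy0
        exact hcons y (hRF (hRmem i0 hi0 (hP0 ▸ hP0') y (hP0 ▸ hy0))) hy)
      (finite_setOfPred_isRoot hPne)
  refine ⟨g.trans h, hgs, ?_⟩
  intro i hi y
  rw [OrderIso.trans_apply, ← hs i hi (g y)]
  by_cases hne : Pf i = 0
  · simp [hne]
  -- the sign of `Pf i` is the same at `y` and `g y`
  have hiff : ∀ c ∈ R, (y < c ↔ g y < c) ∧ (c < y ↔ c < g y) := by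
    intro c hc
    have e := hg c (hRF hc)
    constructor
    · conv_rhs => rw [← e]
      simp
    · conv_rhs => rw [← e]
      simp
  by_cases h0 : (Pf i).eval y = 0
  · rw [hg y (hRF (hRmem i hi hne y h0))]
  by_contra hcon
  -- otherwise there is a root between
  have hroot' : ∃ c ∈ Set.uIcc y (g y), (Pf i).eval c = 0 := by
    have ivt := intermediate_value_uIcc (f := fun y => (Pf i).eval y) (a := y) (b := g y)
      (Pf i).continuous.continuousOn
    have : (0 : ℝ) ∈ Set.uIcc ((Pf i).eval y) ((Pf i).eval (g y)) := by
      rw [Set.mem_uIcc]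
      rcases lt_or_gt_of_ne h0 with h1 | h1
      · left
        refine ⟨h1.le, not_lt.1 fun h2 => hcon ?_⟩
        rw [sign_neg h1, sign_neg h2]
      · right
        refine ⟨not_lt.1 fun h2 => hcon ?_, h1.le⟩
        rw [sign_pos h1, sign_pos h2]
    obtain ⟨c, hc, hc'⟩ := ivt this
    exact ⟨c, hc, hc'⟩
  obtain ⟨c, hc, hc0⟩ := hroot'
  have hcR := hRmem i hi hne c hc0
  have hcy : c ≠ y := by rintro rfl; exact h0 hc0
  obtain ⟨q1, q2⟩ := hiff c hcR
  rw [Set.mem_uIcc] at hc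
  rcases hc with hc | hc
  · have : y < c := lt_of_le_of_ne hc.1 (Ne.symm hcy)
    exact absurd (q1.1 this) (not_lt.2 hc.2)
  · have : c < y := lt_of_le_of_ne hc.2 hcy
    exact absurd (q2.1 this) (not_lt.2 hc.1)

/-- truncation of a polynomial to degrees at most `j` -/
noncomputable def truncLE {A : Type*} [CommRing A] (q : A[X]) (j : ℕ) : A[X] :=
  ∑ i ∈ Finset.range (j + 1), monomial i (q.coeff i)

lemma coeff_truncLE {A : Type*} [CommRing A] (q : A[X]) (j m : ℕ) :
    (truncLE q j).coeff m = if m ≤ j then q.coeff m else 0 := by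
  simp [truncLE, coeff_monomial]

lemma degree_truncLE {A : Type*} [CommRing A] (q : A[X]) (j : ℕ) :
    (truncLE q j).degree ≤ j := by
  rw [degree_le_iff_coeff_zero]
  intro m hm
  rw [coeff_truncLE, if_neg]
  have : j < m := by exact_mod_cast hm
  omega

lemma map_truncLE {A : Type*} [CommRing A] (q : A[X]) (j : ℕ) (φ : A →+* ℝ)
    (h : ∀ m, j < m → φ (q.coeff m) = 0) : (truncLE q j).map φ = q.map φ := by
  ext m
  rw [coeff_map, coeff_map, coeff_truncLE]
  split_ifs with hm
  · rfl
  · rw [h m (by omega), map_zero]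

/-- A family of polynomials over `A` has quantifier elimination. -/
def QElim {A : Type*} [CommRing A] (F : Set A[X]) : Prop :=
  ∃ D : Set A, D.Finite ∧ ∀ φ ψ : A →+* ℝ,
    (∀ δ ∈ D, SignType.sign (φ δ) = SignType.sign (ψ δ)) →
    ∃ h : ℝ ≃o ℝ, ∀ q ∈ F, ∀ y,
      SignType.sign ((q.map φ).eval y) = SignType.sign ((q.map ψ).eval (h y))

lemma sign_zero_iff {x y : ℝ} (h : SignType.sign x = SignType.sign y) : x = 0 ↔ y = 0 := by
  rw [← sign_eq_zero_iff, h, sign_eq_zero_iff]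

lemma qelim_step {A : Type*} [CommRing A] (d : ℕ) (T L : Set A[X]) (p : A[X])
    (hT : T.Finite) (hL : L.Finite) (hTd : ∀ q ∈ T, q.degree ≤ d) (hLd : ∀ q ∈ L, q.degree < d)
    (hp : p.degree ≤ d)
    (ih : ∀ L : Set A[X], L.Finite → (∀ q ∈ L, q.degree < d) → QElim (L ∪ T)) :
    QElim (L ∪ insert p T) := by
  choose K a r hKar hrd using fun (q : A[X]) (j : ℕ) =>
    pseudo_rem (truncLE q j) j (degree_truncLE q j) p
  have hcoe : ∀ (q : A[X]) (j : ℕ), (truncLE q j).coeff j = q.coeff j := by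
    intro q j; rw [coeff_truncLE, if_pos le_rfl]
  rcases Nat.eq_zero_or_pos d with hd0 | hdpos
  · subst hd0
    obtain ⟨D, hD, H⟩ := ih L hL hLd
    refine ⟨insert (p.coeff 0) D, hD.insert _, fun φ ψ hs => ?_⟩
    obtain ⟨h, hh⟩ := H φ ψ (fun δ hδ => hs δ (Or.inr hδ))
    refine ⟨h, ?_⟩
    rintro q (hq | rfl | hq) y
    · exact hh q (Or.inl hq) y
    · rw [eq_C_of_degree_le_zero hp]
      simpa using hs _ (Or.inl rfl)
    · exact hh q (Or.inr hq) y
  have hpd : p.derivative.degree < d := by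
    rw [degree_lt_iff_coeff_zero]
    intro m hm
    rw [coeff_derivative, coeff_eq_zero_of_degree_lt, zero_mul]
    refine hp.trans_lt ?_
    exact_mod_cast Nat.lt_succ_of_le hm
  have hpe : (p.erase d).degree < d := by
    rw [degree_lt_iff_coeff_zero]
    intro m hm
    rw [coeff_erase]
    split_ifs with h
    · rfl
    · apply coeff_eq_zero_of_degree_lt
      refine hp.trans_lt ?_
      exact_mod_cast lt_of_le_of_ne hm (Ne.symm h)
  set B : Set A[X] := insert p.derivative (L ∪ T) with hB
  have hBf : B.Finite := (hL.union hT).insert _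
  have hBd : ∀ q ∈ B, q.degree ≤ d := by
    rintro q (rfl | hq | hq)
    · exact hpd.le
    · exact (hLd q hq).le
    · exact hTd q hq
  set Rm : Set A[X] := ⋃ q ∈ B, (fun j => r q j) '' Set.Iic d with hRm
  set L' : Set A[X] := insert p.derivative (insert (p.erase d) (L ∪ Rm)) with hL'
  have hRf : Rm.Finite := hBf.biUnion fun q _ => (Set.finite_Iic d).image _
  have hRmd : ∀ q ∈ Rm, q.degree < d := by
    intro q hq
    simp only [hRm, Set.mem_iUnion, Set.mem_image] at hq
    obtain ⟨q0, _, j, hj, rfl⟩ := hq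
    refine (hrd q0 j).trans_le ?_
    exact_mod_cast hj
  obtain ⟨D, hD, H⟩ := ih L' (((hL.union hRf).insert _).insert _) (by
    rintro q (rfl | rfl | hq | hq)
    · exact hpd
    · exact hpe
    · exact hLd q hq
    · exact hRmd q hq)
  set D' : Set A := insert (p.coeff d) (D ∪ ⋃ q ∈ B, (fun j => q.coeff j) '' Set.Iic d) with hD'
  refine ⟨D', (hD.union (hBf.biUnion fun q _ => (Set.finite_Iic d).image _)).insert _,
    fun φ ψ hs => ?_⟩
  have hscoef : ∀ q ∈ B, ∀ j, SignType.sign (φ (q.coeff j)) = SignType.sign (ψ (q.coeff j)) := by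
    intro q hq j
    rcases Nat.lt_or_ge d j with hj | hj
    · have h0 : q.coeff j = 0 := by
        apply coeff_eq_zero_of_degree_lt
        refine (hBd q hq).trans_lt ?_
        exact_mod_cast hj
      rw [h0, map_zero φ, map_zero ψ]
    · apply hs
      exact Or.inr (Or.inr (Set.mem_biUnion hq ⟨j, hj, rfl⟩))
  have hsp : SignType.sign (φ (p.coeff d)) = SignType.sign (ψ (p.coeff d)) := hs _ (Or.inl rfl)
  obtain ⟨h, hh⟩ := H φ ψ (fun δ hδ => hs δ (Or.inr (Or.inl hδ)))
  have hhB : ∀ q ∈ B, ∀ y,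
      SignType.sign ((q.map φ).eval y) = SignType.sign ((q.map ψ).eval (h y)) := by
    rintro q (rfl | hq | hq) y
    · exact hh _ (Or.inl (Or.inl rfl)) y
    · exact hh _ (Or.inl (Or.inr (Or.inr (Or.inl hq)))) y
    · exact hh _ (Or.inr hq) y
  by_cases hc : φ (p.coeff d) = 0
  · have hc' : ψ (p.coeff d) = 0 := (sign_zero_iff hsp).1 hc
    have hmap : ∀ χ : A →+* ℝ, χ (p.coeff d) = 0 → p.map χ = (p.erase d).map χ := by
      intro χ hχ
      ext m
      rw [coeff_map, coeff_map, coeff_erase]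
      split_ifs with hm
      · rw [hm, hχ, map_zero]
      · rfl
    refine ⟨h, ?_⟩
    rintro q (hq | rfl | hq) y
    · exact hhB q (Or.inr (Or.inl hq)) y
    · rw [hmap φ hc, hmap ψ hc']
      exact hh _ (Or.inl (Or.inr (Or.inl rfl))) y
    · exact hhB q (Or.inr (Or.inr hq)) y
  have hc' : ψ (p.coeff d) ≠ 0 := fun h0 => hc ((sign_zero_iff hsp).2 h0)
  have hnd : ∀ χ : A →+* ℝ, χ (p.coeff d) ≠ 0 → (p.map χ).natDegree = d := by
    intro χ hχ
    apply natDegree_eq_of_le_of_coeff_ne_zero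
    · exact natDegree_map_le.trans (natDegree_le_of_degree_le hp)
    · rwa [coeff_map]
  have hlead : ∀ χ : A →+* ℝ, χ (p.coeff d) ≠ 0 → (p.map χ).leadingCoeff = χ (p.coeff d) := by
    intro χ hχ
    rw [leadingCoeff, hnd χ hχ, coeff_map]
  obtain ⟨h', h1, h2⟩ := extend_iso B hBf (fun q => q.map φ) (fun q => q.map ψ) h hhB
    (p.map φ) (p.map ψ) (by rw [hnd φ hc]; exact hdpos) (by rw [hnd φ hc, hnd ψ hc'])
    (by rw [hlead φ hc, hlead ψ hc', hsp]) p.derivative (Or.inl rfl)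
    (by rw [derivative_map]) (by rw [derivative_map]) (by
      intro q hq hne y hy
      set j := (q.map φ).natDegree with hj
      have hjd : j ≤ d := natDegree_map_le.trans (natDegree_le_of_degree_le (hBd q hq))
      have hcj : φ (q.coeff j) ≠ 0 := by
        rw [← coeff_map]; exact leadingCoeff_ne_zero.2 hne
      have hsj := hscoef q hq j
      have hab : ∀ m, j < m → φ (q.coeff m) = 0 := by
        intro m hm
        rw [← coeff_map]; exact coeff_eq_zero_of_natDegree_lt hm
      have hab' : ∀ m, j < m → ψ (q.coeff m) = 0 := fun m hm =>
        (sign_zero_iff (hscoef q hq m)).1 (hab m hm)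
      have hy' : (q.map ψ).eval (h y) = 0 := (sign_zero_iff (hhB q hq y)).1 hy
      have hrs := hh (r q j) (Or.inl (Or.inr (Or.inr (Or.inr
        (Set.mem_biUnion hq ⟨j, hjd, rfl⟩))))) y
      have ev : ∀ (χ : A →+* ℝ) (x : ℝ), (∀ m, j < m → χ (q.coeff m) = 0) →
          (q.map χ).eval x = 0 →
          χ (q.coeff j) ^ K q j * (p.map χ).eval x = ((r q j).map χ).eval x := by
        intro χ x hχ hx
        have e := congrArg (fun P : A[X] => (P.map χ).eval x) (hKar q j)
        simp only [Polynomial.map_mul, Polynomial.map_pow, Polynomial.map_add, map_C, eval_mul,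
          eval_pow, eval_add, eval_C, hcoe, map_truncLE q j χ hχ, hx, mul_zero, zero_add] at e
        exact e
      rw [← ev φ y hab hy, ← ev ψ (h y) hab' hy', sign_mul, sign_mul, sign_pow, sign_pow,
        hsj] at hrs
      have hne0 : SignType.sign (ψ (q.coeff j)) ^ K q j ≠ 0 := by
        apply pow_ne_zero
        rw [← hsj]
        exact fun h0 => hcj (sign_eq_zero_iff.1 h0)
      exact mul_left_cancel₀ hne0 hrs)
  refine ⟨h', ?_⟩
  rintro q (hq | rfl | hq) y
  · exact h2 q (Or.inr (Or.inl hq)) y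
  · exact h1 y
  · exact h2 q (Or.inr (Or.inr hq)) y

lemma qelim_of_degree_lt {A : Type*} [CommRing A] (d : ℕ) :
    ∀ F : Set A[X], F.Finite → (∀ q ∈ F, q.degree < d) → QElim F := by
  induction d with
  | zero =>
    intro F _ hF
    refine ⟨∅, Set.finite_empty, fun φ ψ _ => ⟨OrderIso.refl ℝ, fun q hq y => ?_⟩⟩
    have : q = 0 := by
      have := hF q hq
      simpa using this
    simp [this]
  | succ d ihd =>
    have key : ∀ T : Set A[X], T.Finite → (∀ q ∈ T, q.degree ≤ d) →
        ∀ L : Set A[X], L.Finite → (∀ q ∈ L, q.degree < d) → QElim (L ∪ T) := by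
      intro T hT
      induction T, hT using Set.Finite.induction_on with
      | empty => intro _ L hL hLd; simpa using ihd L hL hLd
      | @insert p T _ hTf ih =>
        intro hTd L hL hLd
        exact qelim_step d T L p hTf hL (fun q hq => hTd q (Or.inr hq)) hLd (hTd p (Or.inl rfl))
          (ih fun q hq => hTd q (Or.inr hq))
    intro F hF hFd
    have := key F hF (fun q hq => by
      have := hFd q hq
      push_cast at this
      exact Order.lt_succ_iff.1 this) ∅ Set.finite_empty (by simp)
    simpa using this

lemma qelim_all {A : Type*} [CommRing A] (F : Set A[X]) (hF : F.Finite) : QElim F := by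
  obtain ⟨d, hd⟩ := (hF.image natDegree).bddAbove
  apply qelim_of_degree_lt (d + 1) F hF
  intro q hq
  refine degree_le_natDegree.trans_lt ?_
  exact_mod_cast Nat.lt_succ_of_le (hd ⟨q, hq, rfl⟩)

lemma qelim_mv {A : Type*} [CommRing A] (n : ℕ) : ∀ F : Set (MvPolynomial (Fin n) A), F.Finite →
    ∃ D : Set A, D.Finite ∧ ∀ φ ψ : A →+* ℝ,
      (∀ δ ∈ D, SignType.sign (φ δ) = SignType.sign (ψ δ)) →
      ∀ x : Fin n → ℝ, ∃ x' : Fin n → ℝ, ∀ q ∈ F,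
        SignType.sign (MvPolynomial.eval₂ φ x q) = SignType.sign (MvPolynomial.eval₂ ψ x' q) := by
  induction n with
  | zero =>
    intro F hF
    refine ⟨MvPolynomial.isEmptyRingEquiv A (Fin 0) '' F, hF.image _, fun φ ψ hs x => ⟨x, ?_⟩⟩
    intro q hq
    have e : ∀ χ : A →+* ℝ, MvPolynomial.eval₂ χ x q =
        χ (MvPolynomial.isEmptyRingEquiv A (Fin 0) q) := by
      intro χ
      conv_lhs => rw [← (MvPolynomial.isEmptyRingEquiv A (Fin 0)).symm_apply_apply q]
      rw [MvPolynomial.isEmptyRingEquiv_symm_apply, MvPolynomial.eval₂_C]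
    rw [e, e]
    exact hs _ ⟨q, hq, rfl⟩
  | succ n ih =>
    intro F hF
    obtain ⟨D1, hD1, H1⟩ := qelim_all (MvPolynomial.finSuccEquiv A n '' F) (hF.image _)
    obtain ⟨D, hD, H⟩ := ih D1 hD1
    refine ⟨D, hD, fun φ ψ hs x => ?_⟩
    obtain ⟨x', hx'⟩ := H φ ψ hs (fun i => x i.succ)
    obtain ⟨h, hh⟩ := H1 (MvPolynomial.eval₂Hom φ (fun i => x i.succ))
      (MvPolynomial.eval₂Hom ψ x') (fun δ hδ => hx' δ hδ)
    have e : ∀ (χ : A →+* ℝ) (y : ℝ) (z : Fin n → ℝ) (q : MvPolynomial (Fin (n + 1)) A),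
        MvPolynomial.eval₂ χ (Fin.cons y z : Fin (n + 1) → ℝ) q =
        ((MvPolynomial.finSuccEquiv A n q).map (MvPolynomial.eval₂Hom χ z)).eval y := by
      intro χ y z q
      have : MvPolynomial.eval₂Hom χ (Fin.cons y z : Fin (n + 1) → ℝ) =
          ((evalRingHom y).comp (mapRingHom (MvPolynomial.eval₂Hom χ z))).comp
            (MvPolynomial.finSuccEquiv A n : MvPolynomial (Fin (n + 1)) A →+* _) := by
        apply MvPolynomial.ringHom_ext
        · intro a
          simp [MvPolynomial.finSuccEquiv_apply]
        · intro i
          refine Fin.cases ?_ (fun i => ?_) i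
          · simp [MvPolynomial.finSuccEquiv_apply]
          · simp [MvPolynomial.finSuccEquiv_apply]
      exact congrArg (fun f : MvPolynomial (Fin (n + 1)) A →+* ℝ => f q) this
    refine ⟨(Fin.cons (h (x 0)) x' : Fin (n + 1) → ℝ), fun q hq => ?_⟩
    have hx : x = (Fin.cons (x 0) (fun i => x i.succ) : Fin (n + 1) → ℝ) :=
      (Fin.cons_self_tail x).symm
    rw [e, hx, e]
    exact hh _ ⟨q, hq, rfl⟩ (x 0)

lemma closure_finite_union (T F : Set ℝ) (hF : F.Finite) (hb : Bornology.IsBounded T)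
    (hT : ∀ x y, (∀ c ∈ F, c ∉ Set.uIcc x y) → x ∈ T → y ∈ T) :
    closure T = ⋃ ab ∈ {ab : ℝ × ℝ | ab ∈ F ×ˢ F ∧ ab.1 ≤ ab.2 ∧ Set.Icc ab.1 ab.2 ⊆ closure T},
      Set.Icc ab.1 ab.2 := by
  apply Set.Subset.antisymm
  · intro t ht
    by_cases htF : t ∈ F
    · refine Set.mem_biUnion (x := (t, t)) ⟨⟨htF, htF⟩, le_rfl, ?_⟩ ⟨le_rfl, le_rfl⟩
      intro x hx
      simp only [Set.Icc_self, Set.mem_singleton_iff] at hx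
      rwa [hx]
    · have htT : t ∈ T := by
        obtain ⟨ε, hε, hball⟩ := Metric.isOpen_iff.1 hF.isClosed.isOpen_compl t htF
        obtain ⟨s, hs, hd⟩ := Metric.mem_closure_iff.1 ht ε hε
        refine hT s t ?_ hs
        intro c hc hcu
        have hsb : s ∈ Metric.ball t ε := by rw [Metric.mem_ball, dist_comm]; exact hd
        have htb : t ∈ Metric.ball t ε := Metric.mem_ball_self hε
        have hconv : (Metric.ball t ε).OrdConnected := (convex_ball t ε).ordConnected
        exact hball (hconv.uIcc_subset hsb htb hcu) hc
      have hlo : ∃ c ∈ F, c < t := by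
        by_contra hcon
        push Not at hcon
        obtain ⟨m, hm⟩ := hb.bddBelow
        have hmt := hm htT
        have : m - 1 ∈ T := hT t (m - 1) (by
          intro c hc hcu
          rw [Set.uIcc_of_ge (by linarith)] at hcu
          exact htF (le_antisymm hcu.2 (hcon c hc) ▸ hc)) htT
        linarith [hm this]
      have hhi : ∃ c ∈ F, t < c := by
        by_contra hcon
        push Not at hcon
        obtain ⟨m, hm⟩ := hb.bddAbove
        have hmt := hm htT
        have : m + 1 ∈ T := hT t (m + 1) (by
          intro c hc hcu
          rw [Set.uIcc_of_le (by linarith)] at hcu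
          exact htF (le_antisymm (hcon c hc) hcu.1 ▸ hc)) htT
        linarith [hm this]
      obtain ⟨a, ha, b, hb', hat, htb, hcons⟩ := exists_consecutive F hF t htF hlo hhi
      refine Set.mem_biUnion (x := (a, b)) ⟨⟨ha, hb'⟩, (hat.trans htb).le, ?_⟩ ⟨hat.le, htb.le⟩
      show Set.Icc a b ⊆ closure T
      rw [← closure_Ioo (hat.trans htb).ne]
      apply closure_mono
      intro x hx
      refine hT t x ?_ htT
      intro c hc hcu
      exact hcons c hc ((Set.ordConnected_Ioo).uIcc_subset ⟨hat, htb⟩ hx hcu)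
  · intro t ht
    simp only [Set.mem_iUnion] at ht
    obtain ⟨ab, h, ht⟩ := ht
    exact h.2.2 ht

lemma memTrunc_eval_nonneg {m l k : ℕ} (p : Fin m → ℝ[X]) (q : Fin l → ℝ[X]) (g : ℝ[X])
    (h : MemTrunc k p q g) (t : ℝ) (hp : ∀ i, 0 ≤ (p i).eval t) (hq : ∀ j, (q j).eval t = 0) :
    0 ≤ g.eval t := by
  obtain ⟨σ, ψ, hσ, -, -, rfl⟩ := h
  rw [eval_add, eval_finsetSum, eval_finsetSum]
  apply add_nonneg
  · apply Finset.sum_nonneg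
    intro α _
    rw [eval_mul, eval_prod]
    apply mul_nonneg
    · obtain ⟨r, h, e⟩ := hσ α
      rw [e, eval_finsetSum]
      apply Finset.sum_nonneg
      intro i _
      rw [eval_pow]; positivity
    · apply Finset.prod_nonneg
      intro i _
      split_ifs
      · exact hp i
      · simp
  · apply le_of_eq
    symm
    apply Finset.sum_eq_zero
    intro j _
    rw [eval_mul, hq j, mul_zero]

open Classical in
noncomputable def pOf (a b : ℝ) : ℝ[X] := if a < b then (X - C a) * (C b - X) else 1

open Classical in
noncomputable def qOf (a b : ℝ) : ℝ[X] := if a < b then 0 else X - C a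

lemma simple_pOf (a b : ℝ) : HasOnlySimpleComplexRoots (pOf a b) := by
  have hsep : (pOf a b).Separable := by
    unfold pOf
    split_ifs with h
    · apply Separable.mul
      · exact separable_X_sub_C
      · have := (separable_X_sub_C (x := b)).unit_mul (isUnit_one.neg (α := ℝ[X]))
        simpa using this
      · have : IsCoprime (X - C a) (X - C b) := isCoprime_X_sub_C_of_isUnit_sub
          (IsUnit.mk0 _ (sub_ne_zero.2 h.ne))
        rw [← neg_sub X (C b)]
        exact this.neg_right
    · exact separable_one
  refine ⟨hsep.ne_zero, fun a => ?_⟩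
  exact rootMultiplicity_le_one_of_separable hsep.map a

lemma set_pOf (a b : ℝ) (hab : a ≤ b) (t : ℝ) :
    (0 ≤ (pOf a b).eval t ∧ (qOf a b).eval t = 0) ↔ t ∈ Set.Icc a b := by
  unfold pOf qOf
  split_ifs with h
  · simp only [eval_mul, eval_sub, eval_X, eval_C, eval_zero, and_true, Set.mem_Icc]
    constructor
    · intro h0
      constructor <;> nlinarith
    · rintro ⟨h1, h2⟩
      nlinarith
  · have : a = b := le_antisymm hab (not_lt.1 h)
    subst this
    simp [sub_eq_zero]

lemma sSup_pOf (a b : ℝ) (hab : a ≤ b) (k : ℕ) (hk : 1 ≤ k) :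
    sSup {lam : ℝ | MemTrunc k (fun _ : Fin 1 => pOf a b) (fun _ : Fin 1 => qOf a b)
      (X - C lam)} = a := by
  have k2 : ((2 : ℕ) : WithBot ℕ) ≤ ((2 * k : ℕ) : WithBot ℕ) := by
    exact_mod_cast (by omega : 2 ≤ 2 * k)
  apply IsGreatest.csSup_eq
  constructor
  · show MemTrunc k _ _ _
    by_cases h : a < b
    · have hba : 0 < b - a := sub_pos.2 h
      set s := √(1 / (b - a)) with hs
      have hss : s ^ 2 * (b - a) = 1 := by
        rw [hs, Real.sq_sqrt (by positivity)]; field_simp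
      refine ⟨fun α => if α 0 then (C s) ^ 2 else (C s * (X - C a)) ^ 2, fun _ => 0, ?_, ?_, ?_, ?_⟩
      · intro α
        dsimp only
        split_ifs
        · exact ⟨1, fun _ => C s, by simp⟩
        · exact ⟨1, fun _ => C s * (X - C a), by simp⟩
      · intro α
        refine le_trans ?_ k2
        simp only [Finset.univ_unique, Fin.default_eq_zero, Fin.isValue, Finset.prod_singleton]
        split_ifs
        · simp only [pOf, if_pos h]
          compute_degree; exact le_rfl
        · compute_degree; exact le_rfl
      · intro j; simp
      · simp only [Finset.univ_unique, Fin.default_eq_zero, Fin.isValue, Finset.prod_singleton,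
          zero_mul, Finset.sum_const_zero, add_zero]
        rw [← (Equiv.funUnique (Fin 1) Bool).symm.sum_comp]
        simp only [Fintype.sum_bool]
        simp [pOf, h]
        have e : (C s : ℝ[X]) ^ 2 * (C b - C a) = 1 := by
          rw [← C_pow, ← C_sub, ← C_mul, hss, C_1]
        linear_combination (-(X - C a)) * e
    · refine ⟨fun _ => 0, fun _ => 1, ?_, ?_, ?_, ?_⟩
      · intro α; exact ⟨0, fun _ => 0, by simp⟩
      · intro α; simp
      · intro j
        refine le_trans ?_ k2
        simp only [qOf, if_neg h]
        compute_degree!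
      · simp [qOf, h]
  · intro lam hlam
    have hmem := (set_pOf a b hab a).2 ⟨le_rfl, hab⟩
    have := memTrunc_eval_nonneg _ _ _ hlam a (fun _ => hmem.1) (fun _ => hmem.2)
    simpa using this

lemma image_invariant (n N : ℕ) (f : MvPolynomial (Fin n) ℝ)
    (mP lQ : Fin N → ℕ)
    (P : (u : Fin N) → Fin (mP u) → MvPolynomial (Fin n) ℝ)
    (Qp : (u : Fin N) → Fin (lQ u) → MvPolynomial (Fin n) ℝ)
    (S : Set (Fin n → ℝ))
    (hS : S = ⋃ u, {x | (∀ i, 0 < MvPolynomial.eval x (P u i)) ∧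
        ∀ k, MvPolynomial.eval x (Qp u k) = 0}) :
    ∃ F : Set ℝ, F.Finite ∧ ∀ x y, (∀ c ∈ F, c ∉ Set.uIcc x y) →
      x ∈ ((fun x => MvPolynomial.eval x f) '' S) → y ∈ ((fun x => MvPolynomial.eval x f) '' S) := by
  let E : MvPolynomial (Fin n) ℝ → MvPolynomial (Fin n) ℝ[X] := MvPolynomial.map C
  have hE : ∀ (t : ℝ) (x : Fin n → ℝ) (g : MvPolynomial (Fin n) ℝ),
      MvPolynomial.eval₂ (evalRingHom t) x (E g) = MvPolynomial.eval x g := by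
    intro t x g
    simp only [E]
    rw [MvPolynomial.eval₂_map]
    have : (evalRingHom t).comp C = RingHom.id ℝ := by ext; simp
    rw [this]; rfl
  let f' : MvPolynomial (Fin n) ℝ[X] := E f - MvPolynomial.C X
  have hf' : ∀ (t : ℝ) (x : Fin n → ℝ),
      MvPolynomial.eval₂ (evalRingHom t) x f' = MvPolynomial.eval x f - t := by
    intro t x
    simp only [f']
    rw [MvPolynomial.eval₂_sub, hE, MvPolynomial.eval₂_C]; simp
  obtain ⟨D, hD, H⟩ := qelim_mv n (insert f' ((⋃ u, Set.range fun i => E (P u i)) ∪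
    ⋃ u, Set.range fun i => E (Qp u i)))
    (((Set.finite_iUnion fun u => Set.finite_range _).union
      (Set.finite_iUnion fun u => Set.finite_range _)).insert _)
  refine ⟨⋃ δ ∈ {δ ∈ D | δ ≠ 0}, {t | δ.eval t = 0}, ?_, ?_⟩
  · apply Set.Finite.biUnion (hD.subset fun δ h => h.1)
    intro δ hδ
    exact finite_setOfPred_isRoot hδ.2
  rintro t t' hF ⟨x, hx, rfl⟩
  set t := MvPolynomial.eval x f with ht
  obtain ⟨x', hx'⟩ := H (evalRingHom t) (evalRingHom t') (by
    intro δ hδ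
    by_cases h0 : δ = 0
    · simp [h0]
    by_contra hcon
    simp only [coe_evalRingHom] at hcon
    have ivt := intermediate_value_uIcc (f := fun y => δ.eval y) (a := t) (b := t')
      δ.continuous.continuousOn
    have hmem : (0 : ℝ) ∈ Set.uIcc (δ.eval t) (δ.eval t') := by
      rw [Set.mem_uIcc]
      rcases lt_trichotomy (δ.eval t) 0 with h1 | h1 | h1
      · left
        refine ⟨h1.le, not_lt.1 fun h2 => hcon ?_⟩
        rw [sign_neg h1, sign_neg h2]
      · rw [h1]; exact (le_total _ _).imp (fun h => ⟨le_rfl, h⟩) (fun h => ⟨h, le_rfl⟩)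
      · right
        refine ⟨not_lt.1 fun h2 => hcon ?_, h1.le⟩
        rw [sign_pos h1, sign_pos h2]
    obtain ⟨c, hc, hc0⟩ := ivt hmem
    exact hF c (Set.mem_biUnion (show δ ∈ {δ ∈ D | δ ≠ 0} from ⟨hδ, h0⟩) hc0) hc) x
  refine ⟨x', ?_, ?_⟩
  · rw [hS] at hx ⊢
    simp only [Set.mem_iUnion] at hx ⊢
    obtain ⟨u, h1, h2⟩ := hx
    refine ⟨u, fun i => ?_, fun i => ?_⟩
    · have := hx' (E (P u i)) (Or.inr (Or.inl (Set.mem_iUnion.2 ⟨u, i, rfl⟩)))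
      rw [hE, hE, sign_pos (h1 i)] at this
      exact sign_eq_one_iff.1 this.symm
    · have := hx' (E (Qp u i)) (Or.inr (Or.inr (Set.mem_iUnion.2 ⟨u, i, rfl⟩)))
      rw [hE, hE] at this
      exact (sign_zero_iff this).1 (h2 i)
  · have := hx' f' (Or.inl rfl)
    rw [hf', hf'] at this
    have := (sign_zero_iff this).1 (by rw [ht]; ring)
    show MvPolynomial.eval x' f = t'
    linarith

/-- For a polynomial `f` on `ℝⁿ` and a semi-algebraic set `S ⊆ ℝⁿ`
with `f(S)` nonempty and bounded, and `f⋆ = inf f(S)`, there are finite families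
`p⁽ʲ⁾, q⁽ʲ⁾` of univariate polynomials (each `p_{i,j}` squarefree, pairwise without
common complex roots) such that `⋃_j S(p⁽ʲ⁾, q⁽ʲ⁾)` is the closure of `f(S)` and for
some `K ∈ ℕ` and every `k ≥ K`, `f⋆ = min_j ρ_k(g, p⁽ʲ⁾, q⁽ʲ⁾)` where `g(t) = t` and
`ρ_k(g, p, q) = sup {λ ∈ ℝ : g - λ ∈ T_k(p, q)}`. -/
theorem sos_strengthenings_attain_infimum
    (n N : ℕ) (f : MvPolynomial (Fin n) ℝ)
    (mP lQ : Fin N → ℕ)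
    (P : (u : Fin N) → Fin (mP u) → MvPolynomial (Fin n) ℝ)
    (Qp : (u : Fin N) → Fin (lQ u) → MvPolynomial (Fin n) ℝ)
    (S : Set (Fin n → ℝ))
    (hS : S = ⋃ u, {x | (∀ i, 0 < MvPolynomial.eval x (P u i)) ∧
        ∀ k, MvPolynomial.eval x (Qp u k) = 0})
    (hne : ((fun x => MvPolynomial.eval x f) '' S).Nonempty)
    (hbd : Bornology.IsBounded ((fun x => MvPolynomial.eval x f) '' S))
    (fstar : ℝ) (hfstar : fstar = sInf ((fun x => MvPolynomial.eval x f) '' S)) :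
    ∃ (w : ℕ) (v kk : Fin w → ℕ)
      (p : (j : Fin w) → Fin (v j) → Polynomial ℝ)
      (q : (j : Fin w) → Fin (kk j) → Polynomial ℝ),
      (∀ j i, HasOnlySimpleComplexRoots (p j i)) ∧
      (∀ j, ∀ i i', i ≠ i' → ¬ HasCommonComplexRoot (p j i) (p j i')) ∧
      ((⋃ j, {t : ℝ | (∀ i, 0 ≤ (p j i).eval t) ∧ ∀ k, (q j k).eval t = 0})
        = closure ((fun x => MvPolynomial.eval x f) '' S)) ∧
      ∃ K : ℕ, ∀ k ≥ K,
        IsLeast (Set.range (fun j : Fin w =>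
          sSup {lam : ℝ |
            MemTrunc k (p j) (q j) (Polynomial.X - Polynomial.C lam)})) fstar := by
  obtain ⟨F, hF, hinv⟩ := image_invariant n N f mP lQ P Qp S hS
  set T := (fun x => MvPolynomial.eval x f) '' S with hT
  have hcl := closure_finite_union T F hF hbd hinv
  set J : Set (ℝ × ℝ) :=
    {ab : ℝ × ℝ | ab ∈ F ×ˢ F ∧ ab.1 ≤ ab.2 ∧ Set.Icc ab.1 ab.2 ⊆ closure T} with hJ
  have hJf : J.Finite := (hF.prod hF).subset fun ab h => h.1
  obtain ⟨w, e, -, hrange⟩ : ∃ (w : ℕ) (e : Fin w → ℝ × ℝ), Function.Injective e ∧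
      Set.range e = J := by
    obtain ⟨w, e, he⟩ := hJf.fin_param
    exact ⟨w, e, he⟩
  have heJ : ∀ j, e j ∈ J := fun j => hrange ▸ Set.mem_range_self j
  have hlb : ∀ t ∈ closure T, fstar ≤ t := by
    intro t ht
    have h1 : T ⊆ Set.Ici fstar := fun s hs => hfstar ▸ csInf_le hbd.bddBelow hs
    exact closure_minimal h1 isClosed_Ici ht
  have hfmem : fstar ∈ closure T := by
    rw [hfstar]; exact csInf_mem_closure hne hbd.bddBelow
  have hae : ∀ j, fstar ≤ (e j).1 := fun j =>
    hlb _ ((heJ j).2.2 ⟨le_rfl, (heJ j).2.1⟩)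
  refine ⟨w, fun _ => 1, fun _ => 1, fun j _ => pOf (e j).1 (e j).2, fun j _ => qOf (e j).1 (e j).2,
    fun j i => simple_pOf _ _, fun j i i' h => absurd (Subsingleton.elim i i') h, ?_, 1, ?_⟩
  · rw [hcl, ← hrange]
    ext t
    simp only [Set.mem_iUnion, Set.mem_ofPred_eq, forall_const, Set.mem_range, exists_prop,
      exists_exists_eq_and]
    exact exists_congr fun j => set_pOf _ _ (heJ j).2.1 t
  · intro k hk
    have hsup : ∀ j, sSup {lam : ℝ | MemTrunc k (fun _ : Fin 1 => pOf (e j).1 (e j).2)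
        (fun _ : Fin 1 => qOf (e j).1 (e j).2) (X - C lam)} = (e j).1 :=
      fun j => sSup_pOf _ _ (heJ j).2.1 k hk
    constructor
    · rw [hcl] at hfmem
      simp only [Set.mem_iUnion] at hfmem
      obtain ⟨ab, hab, hfm⟩ := hfmem
      rw [← hrange] at hab
      obtain ⟨j, rfl⟩ := hab
      exact ⟨j, (hsup j).trans (le_antisymm hfm.1 (hae j))⟩
    · rintro _ ⟨j, rfl⟩
      exact (hae j).trans_eq (hsup j).symm
end
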